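/- arXiv:1304.3918 — 9 statements merged into one kernel-verified Lean document; each statement's English description precedes it below -/
import Mathlib

section
/- Let n ≥ 3, let I, J be integers with 1 ≤ I and I + 2 ≤ J ≤ n, let μ ∈ ℝ, σ > 0 and ξ ∈ ℝ with ξ ≠ 0. Then the function g ↦ ξ̂_{IJ}(u_ξ(g_1), …, u_ξ(g_n)) is Lebesgue integrable on the simplex Δ_n and n! · ∫_{Δ_n} ξ̂_{IJ}(u_ξ(g_1), …, u_ξ(g_n)) dg = ξ. That is, each elemental estimator is an absolutely unbiased estimator of the GPD tail parameter ξ for every nonzero ξ and every sample size n ≥ 3. -/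
open MeasureTheory Real Set

/-- The GPD tail-quantile function: `u_ξ(t) = μ + (σ/ξ)(t^{-ξ} - 1)` for `ξ ≠ 0`,
and `u_0(t) = μ - σ log t`. -/
noncomputable def gpdQ (μ σ ξ : ℝ) (t : ℝ) : ℝ :=
  if ξ = 0 then μ - σ * Real.log t else μ + σ / ξ * (t ^ (-ξ) - 1)

/-- The open simplex `Δ_n = {g : 0 < g 1 < ⋯ < g n < 1}` in `ℝ^n`. -/
def simplex (n : ℕ) : Set (Fin n → ℝ) :=
  {g | StrictMono g ∧ ∀ i, 0 < g i ∧ g i < 1}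

/-- The data tuple `X_i = u(g_i)` (1-based indexing: `sample n u g i = u (g_{i-1})`,
for `1 ≤ i ≤ n`; junk value `0` outside this range). -/
noncomputable def sample (n : ℕ) (u : ℝ → ℝ) (g : Fin n → ℝ) : ℕ → ℝ :=
  fun i => if h : i - 1 < n then u (g ⟨i - 1, h⟩) else 0

/-- The elemental estimator
`ξ̂_{IJ}(x) = (J−1)·log(x_I − x_{J−1}) − (J−1−I)·log(x_I − x_J) − I·log(x_{I+1} − x_J)`. -/
noncomputable def elemental (I J : ℕ) (x : ℕ → ℝ) : ℝ :=
  ((J : ℝ) - 1) * Real.log (x I - x (J - 1))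
    - ((J : ℝ) - 1 - (I : ℝ)) * Real.log (x I - x J)
    - (I : ℝ) * Real.log (x (I + 1) - x J)

namespace Elem

lemma simplex_eq (n : ℕ) : simplex n =
    (⋂ i : Fin n, ⋂ j : Fin n, {g | i < j → g i < g j}) ∩ ⋂ i : Fin n, {g | 0 < g i ∧ g i < 1} := by
  ext g
  simp only [simplex, Set.mem_ofPred_eq, Set.mem_inter_iff, Set.mem_iInter]
  exact Iff.rfl

lemma measurableSet_simplex (n : ℕ) : MeasurableSet (simplex n) := by
  rw [simplex_eq]
  refine MeasurableSet.inter ?_ ?_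
  · refine MeasurableSet.iInter fun i => MeasurableSet.iInter fun j => ?_
    by_cases h : i < j
    · simp only [h, forall_const]
      exact measurableSet_lt (measurable_pi_apply _) (measurable_pi_apply _)
    · simp [h]
  · refine MeasurableSet.iInter fun i => ?_
    exact (measurableSet_lt measurable_const (measurable_pi_apply _)).inter
      (measurableSet_lt (measurable_pi_apply _) measurable_const)

lemma simplex_subset (n : ℕ) : simplex n ⊆ Set.univ.pi fun _ => Ioo (0 : ℝ) 1 := by
  intro g hg i _
  exact hg.2 i

lemma volume_simplex_ne_top (n : ℕ) : volume (simplex n) ≠ ⊤ := by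
  refine ne_top_of_le_ne_top ?_ (measure_mono (simplex_subset n))
  rw [volume_pi_pi]
  simp

/-- The set of pairs `(t, h)` such that inserting `t` at place `k` of `h` gives a simplex point. -/
def ins (m : ℕ) (k : Fin (m + 1)) : Set (ℝ × (Fin m → ℝ)) :=
  {p | p.2 ∈ simplex m ∧ (0 < p.1 ∧ p.1 < 1) ∧ (∀ i, i.castSucc < k → p.2 i < p.1) ∧
    ∀ i, k ≤ i.castSucc → p.1 < p.2 i}

lemma mem_ins {m : ℕ} (k : Fin (m + 1)) (p : ℝ × (Fin m → ℝ)) :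
    p ∈ ins m k ↔ k.insertNth (α := fun _ => ℝ) p.1 p.2 ∈ simplex (m + 1) := by
  simp only [ins, simplex, Set.mem_ofPred_eq, Fin.strictMono_insertNth_iff,
    Fin.forall_iff_succAbove k, Fin.insertNth_apply_same, Fin.insertNth_apply_succAbove]
  tauto

lemma preimage_ins {m : ℕ} (k : Fin (m + 1)) :
    (MeasurableEquiv.piFinSuccAbove (fun _ => ℝ) k) ⁻¹' ins m k = simplex (m + 1) := by
  ext g
  rw [Set.mem_preimage, mem_ins]
  have : k.insertNth (α := fun _ => ℝ) ((MeasurableEquiv.piFinSuccAbove (fun _ => ℝ) k) g).1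
    ((MeasurableEquiv.piFinSuccAbove (fun _ => ℝ) k) g).2 = g :=
      (MeasurableEquiv.piFinSuccAbove (fun _ => ℝ) k).symm_apply_apply g
  rw [this]

lemma measurableSet_ins {m : ℕ} (k : Fin (m + 1)) : MeasurableSet (ins m k) := by
  have : ins m k = (MeasurableEquiv.piFinSuccAbove (fun _ => ℝ) k).symm ⁻¹' simplex (m + 1) := by
    ext p
    rw [mem_ins]; rfl
  rw [this]
  exact (MeasurableEquiv.measurable _) (measurableSet_simplex _)

lemma ins_subset {m : ℕ} (k : Fin (m + 1)) : ins m k ⊆ Ioo (0 : ℝ) 1 ×ˢ simplex m :=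
  fun _ hp => ⟨hp.2.1, hp.1⟩

lemma ins_disjoint (m : ℕ) : Pairwise (Function.onFun Disjoint (ins m)) := by
  have key : ∀ k k' : Fin (m + 1), k < k' → Disjoint (ins m k) (ins m k') := by
    intro k k' h
    rw [Set.disjoint_left]
    rintro p ⟨-, -, -, h1⟩ ⟨-, -, h2, -⟩
    obtain ⟨j, rfl⟩ := k.eq_castSucc_of_ne_last (Fin.ne_last_of_lt h)
    exact lt_asymm (h1 j le_rfl) (h2 j h)
  intro k k' h
  rcases lt_or_gt_of_ne h with h | h
  · exact key _ _ h
  · exact (key _ _ h).symm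

lemma exists_ins {m : ℕ} (t : ℝ) (h : Fin m → ℝ) (ht : t ∈ Ioo (0 : ℝ) 1) (hh : h ∈ simplex m)
    (hne : ∀ j, h j ≠ t) : ∃ k, (t, h) ∈ ins m k := by
  classical
  by_cases hall : ∀ j, h j < t
  · refine ⟨Fin.last m, hh, ht, fun i _ => hall i, fun i hi => ?_⟩
    exact absurd hi (not_le.2 (Fin.castSucc_lt_last i))
  · push Not at hall
    obtain ⟨j0, hj0⟩ := hall
    have hex : ∃ j, j ∈ (Finset.univ.filter fun j => t ≤ h j) ∧
        ∀ i ∈ (Finset.univ.filter fun j => t ≤ h j), j ≤ i := by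
      have hn : (Finset.univ.filter fun j => t ≤ h j).Nonempty := ⟨j0, by simpa using hj0⟩
      exact ⟨_, Finset.min'_mem _ hn, fun i hi => Finset.min'_le _ i hi⟩
    obtain ⟨j, hj, hmin⟩ := hex
    simp only [Finset.mem_filter, Finset.mem_univ, true_and] at hj hmin
    refine ⟨j.castSucc, hh, ht, fun i hi => ?_, fun i hi => ?_⟩
    · by_contra hc
      exact absurd (hmin i (not_lt.1 hc)) (not_le.2 (Fin.castSucc_lt_castSucc_iff.1 hi))
    · have h1 : t < h j := lt_of_le_of_ne hj (hne j).symm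
      exact h1.trans_le (hh.1.monotone (Fin.castSucc_le_castSucc_iff.1 hi))

lemma iUnion_ins_ae (m : ℕ) :
    (⋃ k, ins m k : Set (ℝ × (Fin m → ℝ))) =ᵐ[volume] (Ioo (0 : ℝ) 1 ×ˢ simplex m) := by
  have hae : ∀ j : Fin m, ∀ᵐ p : ℝ × (Fin m → ℝ) ∂volume, p.2 j ≠ p.1 := by
    intro j
    rw [Measure.volume_eq_prod, Measure.ae_prod_iff_ae_ae]
    · filter_upwards with t
      exact Measure.ae_eval_ne (α := fun _ : Fin m => ℝ) (fun _ => volume) j t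
    · exact (measurableSet_eq_fun (by fun_prop) (by fun_prop)).compl
  filter_upwards [ae_all_iff.2 hae] with p hp
  refine propext ⟨fun h => ?_, fun h => ?_⟩
  · obtain ⟨k, hk⟩ := Set.mem_iUnion.1 h
    exact ins_subset k hk
  · exact Set.mem_iUnion.2 (exists_ins p.1 p.2 h.1 h.2 hp)

lemma integrableOn_prod {m : ℕ} {G : (Fin m → ℝ) → ℝ} (hG : IntegrableOn G (simplex m)) :
    IntegrableOn (fun p : ℝ × (Fin m → ℝ) => G p.2) (Ioo (0 : ℝ) 1 ×ˢ simplex m) := by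
  rw [IntegrableOn, Measure.volume_eq_prod, ← Measure.prod_restrict]
  exact Integrable.comp_snd hG _

lemma integrableOn_remove {m : ℕ} {G : (Fin m → ℝ) → ℝ} (hG : IntegrableOn G (simplex m))
    (k : Fin (m + 1)) :
    IntegrableOn (fun g => G (fun j => g (k.succAbove j))) (simplex (m + 1)) := by
  rw [← preimage_ins k]
  exact ((volume_preserving_piFinSuccAbove (fun _ => ℝ) k).integrableOn_comp_preimage
    (MeasurableEquiv.measurableEmbedding _)).2 ((integrableOn_prod hG).mono_set (ins_subset k))

lemma integral_remove {m : ℕ} (G : (Fin m → ℝ) → ℝ) (k : Fin (m + 1)) :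
    ∫ g in simplex (m + 1), G (fun j => g (k.succAbove j)) = ∫ p in ins m k, G p.2 := by
  rw [← preimage_ins k]
  exact (volume_preserving_piFinSuccAbove (fun _ => ℝ) k).setIntegral_preimage_emb
    (MeasurableEquiv.measurableEmbedding _) (fun p => G p.2) (ins m k)

lemma sum_integral_remove {m : ℕ} {G : (Fin m → ℝ) → ℝ} (hG : IntegrableOn G (simplex m)) :
    ∑ k : Fin (m + 1), ∫ g in simplex (m + 1), G (fun j => g (k.succAbove j))
      = ∫ h in simplex m, G h := by
  simp_rw [integral_remove]
  rw [← integral_iUnion_fintype (f := fun p : ℝ × (Fin m → ℝ) => G p.2) measurableSet_ins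
    (ins_disjoint m) (fun k => (integrableOn_prod hG).mono_set (ins_subset k)),
    setIntegral_congr_set (iUnion_ins_ae m), Measure.volume_eq_prod,
    setIntegral_prod _ (integrableOn_prod hG)]
  simp

lemma volume_simplex (m : ℕ) : (m.factorial : ℝ) * ∫ _ in simplex m, (1 : ℝ) = 1 := by
  induction m with
  | zero =>
    have : simplex 0 = Set.univ := by
      ext g
      simp [simplex, Subsingleton.strictMono]
    simp [this, measureReal_def, volume_pi]
  | succ m ih =>
    have h := sum_integral_remove (m := m) (G := fun _ => 1)
      (integrableOn_const (volume_simplex_ne_top m))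
    rw [← h] at ih
    simp only [Finset.sum_const, Finset.card_univ, Fintype.card_fin, nsmul_eq_mul] at ih
    rw [Nat.factorial_succ]
    push_cast at ih ⊢
    linarith

lemma integral_pow_log (m : ℕ) :
    ∫ t in Ioo (0 : ℝ) 1, t ^ m * Real.log t = -(1 / ((m : ℝ) + 1) ^ 2) := by
  have hm : (m : ℝ) + 1 ≠ 0 := by positivity
  rw [← integral_Ioc_eq_integral_Ioo, ← intervalIntegral.integral_of_le zero_le_one]
  rw [intervalIntegral.integral_eq_sub_of_hasDerivAt_of_le
    (f := fun t => t ^ m * (t * Real.log t) / (m + 1) - t ^ (m + 1) / (m + 1) ^ 2) zero_le_one]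
  · simp
  · have := Real.continuous_mul_log
    fun_prop
  · intro x hx
    have h1 := (((hasDerivAt_pow (m + 1) x).mul (Real.hasDerivAt_log hx.1.ne')).div_const
      ((m : ℝ) + 1)).sub ((hasDerivAt_pow (m + 1) x).div_const (((m : ℝ) + 1) ^ 2))
    have h2 : (fun t : ℝ => t ^ m * (t * Real.log t) / (m + 1) - t ^ (m + 1) / (m + 1) ^ 2)
      = (fun t : ℝ => t ^ (m + 1) * Real.log t / (m + 1) - t ^ (m + 1) / (m + 1) ^ 2) := by
      funext t; ring
    rw [h2]
    convert! h1 using 1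
    have := hx.1.ne'
    push_cast
    field_simp
    ring
  · exact intervalIntegral.intervalIntegrable_log'.continuousOn_mul (by fun_prop)

lemma integral_pow (m : ℕ) :
    ∫ t in Ioo (0 : ℝ) 1, t ^ m = 1 / ((m : ℝ) + 1) := by
  rw [← integral_Ioc_eq_integral_Ioo, ← intervalIntegral.integral_of_le zero_le_one]
  simp

lemma smul_simplex {m : ℕ} {t : ℝ} (ht : t ∈ Ioo (0 : ℝ) 1) (h : Fin m → ℝ) :
    (t, h) ∈ ins m (Fin.last m) ↔ t⁻¹ • h ∈ simplex m := by
  have h0 := ht.1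
  have hlast : ∀ i : Fin m, ¬ (Fin.last m ≤ i.castSucc) := fun i =>
    not_le.2 (Fin.castSucc_lt_last i)
  have hs : ∀ s : ℝ, (t⁻¹ * s < 1 ↔ s < t) := fun s => by
    rw [inv_mul_lt_iff₀ h0, mul_one]
  simp only [ins, simplex, Set.mem_ofPred_eq, Fin.castSucc_lt_last, forall_const, hlast,
    false_imp_iff, implies_true, and_true, Pi.smul_apply, smul_eq_mul, StrictMono, hs,
    mul_lt_mul_iff_right₀ (inv_pos.2 h0), mul_pos_iff_of_pos_left (inv_pos.2 h0)]
  constructor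
  · rintro ⟨⟨a, b⟩, c, d⟩
    exact ⟨a, fun i => ⟨(b i).1, d i⟩⟩
  · rintro ⟨a, b⟩
    exact ⟨⟨a, fun i => ⟨(b i).1, (b i).2.trans ht.2⟩⟩, ht, fun i => (b i).2⟩

lemma integral_last {m : ℕ} {G : (Fin m → ℝ) → ℝ} (hG : IntegrableOn G (simplex m)) (ξ : ℝ)
    (hs : ∀ t ∈ Ioo (0 : ℝ) 1, ∀ h ∈ simplex m, G (t • h) = G h - ξ * Real.log t) :
    ((m : ℝ) + 1) * ∫ g in simplex (m + 1), G (fun j => g ((Fin.last m).succAbove j))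
      = (∫ h in simplex m, G h) + ξ / (m + 1) * ∫ _ in simplex m, (1 : ℝ) := by
  have hm : (m : ℝ) + 1 ≠ 0 := by positivity
  rw [integral_remove]
  have hInt : IntegrableOn (fun p : ℝ × (Fin m → ℝ) => G p.2) (ins m (Fin.last m)) :=
    (integrableOn_prod hG).mono_set (ins_subset _)
  have e1 : ∫ p in ins m (Fin.last m), G p.2
      = ∫ p in Ioo (0 : ℝ) 1 ×ˢ (Set.univ : Set (Fin m → ℝ)),
        (ins m (Fin.last m)).indicator (fun p => G p.2) p := by
    rw [setIntegral_indicator (measurableSet_ins _)]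
    congr 2
    symm
    exact Set.inter_eq_right.2 fun p hp => ⟨hp.2.1, trivial⟩
  rw [e1, Measure.volume_eq_prod, setIntegral_prod _
    ((integrable_indicator_iff (measurableSet_ins _)).2 hInt).integrableOn]
  have e2 : ∀ t ∈ Ioo (0 : ℝ) 1, ∫ h in (Set.univ : Set (Fin m → ℝ)),
      (ins m (Fin.last m)).indicator (fun p => G p.2) (t, h)
      = (∫ h in simplex m, G h) * t ^ m - ξ * (∫ _ in simplex m, (1 : ℝ)) * (t ^ m * Real.log t) := by
    intro t ht
    have h0 := ht.1
    rw [setIntegral_univ]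
    have e3 : (fun h => (ins m (Fin.last m)).indicator (fun p => G p.2) (t, h))
        = fun h => (simplex m).indicator (fun x => G (t • x)) (t⁻¹ • h) := by
      funext h
      by_cases hh : t⁻¹ • h ∈ simplex m
      · rw [Set.indicator_of_mem hh, Set.indicator_of_mem ((smul_simplex ht h).2 hh),
          smul_inv_smul₀ h0.ne']
      · rw [Set.indicator_of_notMem hh, Set.indicator_of_notMem (fun hc => hh
          ((smul_simplex ht h).1 hc))]
    rw [e3, Measure.integral_comp_smul_of_nonneg _ _ _ (hR := (inv_pos.2 h0).le),
      integral_indicator (measurableSet_simplex m),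
      setIntegral_congr_fun (measurableSet_simplex m) (fun h hh => hs t ht h hh),
      integral_sub hG (integrableOn_const (volume_simplex_ne_top m))]
    simp only [Module.finrank_fintype_fun_eq_card, Fintype.card_fin, inv_pow, inv_inv,
      setIntegral_const, smul_eq_mul]
    ring
  rw [setIntegral_congr_fun measurableSet_Ioo e2, integral_sub, integral_const_mul,
    integral_const_mul, integral_pow, integral_pow_log]
  · field_simp
    ring
  · refine Integrable.const_mul ?_ _
    have : IntervalIntegrable (fun t : ℝ => t ^ m) volume 0 1 :=
      (continuous_pow m).intervalIntegrable _ _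
    exact ((intervalIntegrable_iff_integrableOn_Ioo_of_le zero_le_one).1 this)
  · refine Integrable.const_mul ?_ _
    have : IntervalIntegrable (fun t : ℝ => t ^ m * Real.log t) volume 0 1 :=
      intervalIntegral.intervalIntegrable_log'.continuousOn_mul (by fun_prop)
    exact ((intervalIntegrable_iff_integrableOn_Ioo_of_le zero_le_one).1 this)

lemma gpdQ_sub {μ σ ξ s t : ℝ} (hξ : ξ ≠ 0) (hs : 0 < s) (hst : s < t) :
    ∃ c ∈ Ioo s t, gpdQ μ σ ξ s - gpdQ μ σ ξ t = σ * ((t - s) * c ^ (-ξ - 1)) := by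
  obtain ⟨c, hc, h⟩ := exists_hasDerivAt_eq_slope (fun x : ℝ => -x ^ (-ξ) / ξ)
    (fun x : ℝ => x ^ (-ξ - 1)) hst
    (by
      intro x hx
      have hx0 : 0 < x := hs.trans_le hx.1
      have := (((Real.hasDerivAt_rpow_const (p := -ξ) (Or.inl hx0.ne')).neg).div_const ξ)
      exact this.continuousAt.continuousWithinAt)
    (by
      intro x hx
      have hx0 : 0 < x := hs.trans hx.1
      have := (((Real.hasDerivAt_rpow_const (p := -ξ) (Or.inl hx0.ne')).neg).div_const ξ)
      convert! this using 1
      field_simp)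
  refine ⟨c, hc, ?_⟩
  have h0 : t - s ≠ 0 := sub_ne_zero.2 hst.ne'
  rw [h]
  simp only [gpdQ, hξ, if_false]
  field_simp
  ring

lemma gpdQ_sub_pos {μ σ ξ s t : ℝ} (hξ : ξ ≠ 0) (hσ : 0 < σ) (hs : 0 < s) (hst : s < t) :
    0 < gpdQ μ σ ξ s - gpdQ μ σ ξ t := by
  obtain ⟨c, hc, h⟩ := gpdQ_sub (μ := μ) (σ := σ) hξ hs hst
  rw [h]
  exact mul_pos hσ (mul_pos (sub_pos.2 hst) (Real.rpow_pos_of_pos (hs.trans hc.1) _))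

lemma gpdQ_log_bound {μ σ ξ s t : ℝ} (hξ : ξ ≠ 0) (hσ : 0 < σ) (hs : 0 < s) (hst : s < t)
    (ht : t < 1) :
    |Real.log (gpdQ μ σ ξ s - gpdQ μ σ ξ t)| ≤
      |Real.log σ| + |Real.log (t - s)| + |-ξ - 1| * |Real.log s| := by
  obtain ⟨c, hc, h⟩ := gpdQ_sub (μ := μ) (σ := σ) hξ hs hst
  have hc0 : 0 < c := hs.trans hc.1
  have h0 : 0 < t - s := sub_pos.2 hst
  have hp : 0 < c ^ (-ξ - 1) := Real.rpow_pos_of_pos hc0 _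
  rw [h, Real.log_mul hσ.ne' (mul_pos h0 hp).ne', Real.log_mul h0.ne' hp.ne',
    Real.log_rpow hc0, ← add_assoc]
  refine (abs_add_three _ _ _).trans ?_
  rw [abs_mul]
  have h1 : Real.log s ≤ Real.log c := Real.log_le_log hs hc.1.le
  have h2 : Real.log c ≤ 0 := Real.log_nonpos hc0.le (hc.2.trans ht).le
  refine add_le_add le_rfl (mul_le_mul_of_nonneg_left ?_ (abs_nonneg _))
  rw [abs_of_nonpos h2, abs_of_nonpos (h1.trans h2)]
  linarith

lemma gpdQ_scale {μ σ ξ s t c : ℝ} (hξ : ξ ≠ 0) (hσ : 0 < σ) (hs : 0 < s) (hst : s < t)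
    (hc : 0 < c) :
    Real.log (gpdQ μ σ ξ (c * s) - gpdQ μ σ ξ (c * t)) =
      Real.log (gpdQ μ σ ξ s - gpdQ μ σ ξ t) - ξ * Real.log c := by
  have h : gpdQ μ σ ξ (c * s) - gpdQ μ σ ξ (c * t) =
      c ^ (-ξ) * (gpdQ μ σ ξ s - gpdQ μ σ ξ t) := by
    simp only [gpdQ, hξ, if_false]
    rw [Real.mul_rpow hc.le hs.le, Real.mul_rpow hc.le (hs.trans hst).le]
    ring
  rw [h, Real.log_mul (Real.rpow_pos_of_pos hc _).ne' (gpdQ_sub_pos hξ hσ hs hst).ne',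
    Real.log_rpow hc]
  ring

lemma integrable_log_eval {m : ℕ} (a : Fin m) :
    IntegrableOn (fun h : Fin m → ℝ => Real.log (h a)) (simplex m) := by
  refine IntegrableOn.mono_set ?_ (simplex_subset m)
  rw [IntegrableOn, volume_pi, Measure.restrict_pi_pi]
  refine integrable_comp_eval (μ := fun _ : Fin m => volume.restrict (Ioo (0 : ℝ) 1)) (i := a)
    (f := Real.log) ?_
  exact (intervalIntegrable_iff_integrableOn_Ioo_of_le zero_le_one).1
    intervalIntegral.intervalIntegrable_log'

lemma integrable_log_sub {m : ℕ} (a b : Fin m) (hab : a ≠ b) :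
    IntegrableOn (fun h : Fin m → ℝ => Real.log (h b - h a)) (simplex m) := by
  cases m with
  | zero => exact a.elim0
  | succ m =>
  obtain ⟨c, rfl⟩ := Fin.exists_succAbove_eq hab
  set φ : ℝ → ℝ := (Ioo (-1 : ℝ) 1).indicator Real.log with hφ
  have hφi : Integrable φ := by
    rw [hφ, integrable_indicator_iff measurableSet_Ioo]
    exact (intervalIntegrable_iff_integrableOn_Ioo_of_le (by norm_num)).1
      intervalIntegral.intervalIntegrable_log'
  have hφm : Measurable φ := Real.measurable_log.indicator measurableSet_Ioo
  have hprod : Integrable (fun p : ℝ × (Fin m → ℝ) => φ (p.1 - p.2 c))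
      (volume.prod (volume.restrict (simplex m))) := by
    rw [integrable_prod_iff' (by
      refine Measurable.aestronglyMeasurable ?_
      exact hφm.comp (by fun_prop))]
    refine ⟨Filter.Eventually.of_forall fun h => hφi.comp_sub_right (h c), ?_⟩
    have : (fun h : Fin m → ℝ => ∫ x : ℝ, ‖φ (x - h c)‖) = fun _ => ∫ x : ℝ, ‖φ x‖ := by
      funext h
      exact integral_sub_right_eq_self (fun x => ‖φ x‖) (h c)
    simp only [this]
    exact integrableOn_const (volume_simplex_ne_top m)
  have hS : IntegrableOn (fun p : ℝ × (Fin m → ℝ) => Real.log (p.1 - p.2 c)) (ins m b) := by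
    have h1 : IntegrableOn (fun p : ℝ × (Fin m → ℝ) => φ (p.1 - p.2 c))
        (Ioo (0 : ℝ) 1 ×ˢ simplex m) := by
      rw [IntegrableOn, Measure.volume_eq_prod, ← Measure.prod_restrict]
      exact hprod.mono_measure (Measure.prod_mono Measure.restrict_le_self le_rfl)
    refine (h1.mono_set (ins_subset b)).congr_fun (fun p hp => ?_) (measurableSet_ins b)
    have h2 := hp.2.1
    have h3 := hp.1.2 c
    simp only [hφ]
    rw [Set.indicator_of_mem]
    constructor <;> linarith [h2.1, h2.2, h3.1, h3.2]
  rw [← preimage_ins b]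
  exact ((volume_preserving_piFinSuccAbove (fun _ => ℝ) b).integrableOn_comp_preimage
    (MeasurableEquiv.measurableEmbedding _)).2 hS

lemma measurable_gpdQ (μ σ ξ : ℝ) : Measurable (gpdQ μ σ ξ) := by
  unfold gpdQ
  split_ifs
  · fun_prop
  · fun_prop

lemma integrable_G {m : ℕ} {μ σ ξ : ℝ} (hξ : ξ ≠ 0) (hσ : 0 < σ) (a b : Fin m) (hab : a < b) :
    IntegrableOn (fun h : Fin m → ℝ => Real.log (gpdQ μ σ ξ (h a) - gpdQ μ σ ξ (h b)))
      (simplex m) := by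
  have hb : IntegrableOn (fun h : Fin m → ℝ => |Real.log σ| + |Real.log (h b - h a)|
      + |-ξ - 1| * |Real.log (h a)|) (simplex m) :=
    ((integrableOn_const (volume_simplex_ne_top m)).add (integrable_log_sub a b hab.ne).abs).add
      ((integrable_log_eval a).abs.const_mul _)
  refine Integrable.mono' hb ?_ ?_
  · have := measurable_gpdQ μ σ ξ
    refine Measurable.aestronglyMeasurable ?_
    fun_prop
  · filter_upwards [ae_restrict_mem (measurableSet_simplex m)] with h hh
    exact gpdQ_log_bound hξ hσ (hh.2 a).1 (hh.1 hab) (hh.2 b).2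

lemma pointwise (m I J : ℕ) (hI : 1 ≤ I) (hIJ : I + 2 ≤ J) (hJ : J ≤ m + 1) (u : ℝ → ℝ)
    (g : Fin (m + 1) → ℝ) (a b : Fin m) (ha : (a : ℕ) = I - 1) (hb : (b : ℕ) = J - 2) :
    elemental I J (sample (m + 1) u g) =
      ((m : ℝ) + 1) * Real.log (u (g ((Fin.last m).succAbove a)) - u (g ((Fin.last m).succAbove b)))
      - ∑ k : Fin (m + 1), Real.log (u (g (k.succAbove a)) - u (g (k.succAbove b))) := by
  set x := sample (m + 1) u g with hx
  have hxs : ∀ i : Fin (m + 1), u (g i) = x (i + 1) := by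
    intro i
    have hi : (i : ℕ) + 1 - 1 < m + 1 := by omega
    simp only [hx, sample, dif_pos hi]
    rfl
  obtain ⟨F, hF⟩ : ∃ F : ℕ → ℝ, F = fun k : ℕ =>
      Real.log ((if k < I then x (I + 1) else x I) -
        (if k < J - 1 then x J else x (J - 1))) := ⟨_, rfl⟩
  have hk : ∀ k : Fin (m + 1), Real.log (u (g (k.succAbove a)) - u (g (k.succAbove b))) =
      F k := by
    intro k
    have h1 : u (g (k.succAbove a)) = if (k : ℕ) < I then x (I + 1) else x I := by
      rw [hxs]
      split_ifs with h
      · rw [Fin.succAbove_of_le_castSucc _ _ (by rw [Fin.le_def]; simp; omega)]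
        congr 1; simp; omega
      · rw [Fin.succAbove_of_castSucc_lt _ _ (by rw [Fin.lt_def]; simp; omega)]
        congr 1; simp; omega
    have h2 : u (g (k.succAbove b)) = if (k : ℕ) < J - 1 then x J else x (J - 1) := by
      rw [hxs]
      split_ifs with h
      · rw [Fin.succAbove_of_le_castSucc _ _ (by rw [Fin.le_def]; simp; omega)]
        congr 1; simp; omega
      · rw [Fin.succAbove_of_castSucc_lt _ _ (by rw [Fin.lt_def]; simp; omega)]
        congr 1; simp; omega
    rw [h1, h2, hF]
  rw [hk (Fin.last m), Finset.sum_congr rfl (fun k _ => hk k), Fin.sum_univ_eq_sum_range F,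
    Finset.range_eq_Ico, ← Finset.sum_Ico_consecutive _ (Nat.zero_le I) (by omega : I ≤ m + 1),
    ← Finset.sum_Ico_consecutive _ (by omega : I ≤ J - 1) (by omega : J - 1 ≤ m + 1)]
  rw [Finset.sum_congr (g := fun _ => Real.log (x (I + 1) - x J)) (s₁ := Finset.Ico 0 I) rfl
    (by
      intro k hk
      rw [Finset.mem_Ico] at hk
      simp only [hF]
      rw [if_pos hk.2, if_pos (by omega)])]
  rw [Finset.sum_congr (g := fun _ => Real.log (x I - x J)) (s₁ := Finset.Ico I (J - 1)) rfl
    (by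
      intro k hk
      rw [Finset.mem_Ico] at hk
      simp only [hF]
      rw [if_neg (by omega), if_pos (by omega)])]
  rw [Finset.sum_congr (g := fun _ => Real.log (x I - x (J - 1)))
    (s₁ := Finset.Ico (J - 1) (m + 1)) rfl
    (by
      intro k hk
      rw [Finset.mem_Ico] at hk
      simp only [hF]
      rw [if_neg (by omega), if_neg (by omega)])]
  simp only [Finset.sum_const, Nat.card_Ico, nsmul_eq_mul, Fin.val_last, hF, Nat.sub_zero]
  rw [if_neg (by omega), if_neg (by omega), Nat.cast_sub (by omega : J - 1 ≤ m + 1),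
    Nat.cast_sub (by omega : I ≤ J - 1), Nat.cast_sub (by omega : 1 ≤ J), elemental]
  push_cast
  ring

end Elem

/-- Each elemental estimator is an absolutely unbiased estimator of the GPD tail
parameter `ξ` for every nonzero `ξ` and every sample size `n ≥ 3`. -/
theorem elemental_unbiased (n I J : ℕ) (hn : 3 ≤ n) (hI : 1 ≤ I)
    (hIJ : I + 2 ≤ J) (hJn : J ≤ n) (μ σ ξ : ℝ) (hσ : 0 < σ) (hξ : ξ ≠ 0) :
    IntegrableOn (fun g => elemental I J (sample n (gpdQ μ σ ξ) g)) (simplex n) volume ∧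
    (n.factorial : ℝ) * ∫ g in simplex n, elemental I J (sample n (gpdQ μ σ ξ) g) = ξ := by
  obtain ⟨m, rfl⟩ : ∃ m, n = m + 1 := ⟨n - 1, by omega⟩
  let a : Fin m := ⟨I - 1, by omega⟩
  let b : Fin m := ⟨J - 2, by omega⟩
  have hab : a < b := by
    rw [Fin.lt_def]
    simp only [a, b]
    omega
  let G : (Fin m → ℝ) → ℝ := fun h => Real.log (gpdQ μ σ ξ (h a) - gpdQ μ σ ξ (h b))
  have hG : IntegrableOn G (simplex m) := Elem.integrable_G hξ hσ a b hab
  have hpt : (fun g => elemental I J (sample (m + 1) (gpdQ μ σ ξ) g)) = fun g =>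
      ((m : ℝ) + 1) * G (fun j => g ((Fin.last m).succAbove j))
        - ∑ k : Fin (m + 1), G (fun j => g (k.succAbove j)) := by
    funext g
    exact Elem.pointwise m I J hI hIJ hJn (gpdQ μ σ ξ) g a b rfl rfl
  have hi1 := (Elem.integrableOn_remove hG (Fin.last m)).const_mul ((m : ℝ) + 1)
  have hi2 : ∀ k ∈ (Finset.univ : Finset (Fin (m + 1))),
      Integrable (fun g => G (fun j => g (k.succAbove j))) (volume.restrict (simplex (m + 1))) :=
    fun k _ => Elem.integrableOn_remove hG k
  rw [hpt]
  refine ⟨hi1.sub (integrable_finsetSum _ hi2), ?_⟩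
  rw [integral_sub hi1 (integrable_finsetSum _ hi2), integral_finsetSum _ hi2,
    Elem.sum_integral_remove hG, integral_const_mul, Elem.integral_last hG ξ ?_]
  · have hv := Elem.volume_simplex m
    have hm : (m : ℝ) + 1 ≠ 0 := by positivity
    rw [Nat.factorial_succ]
    push_cast
    rw [add_sub_cancel_left]
    calc ((m : ℝ) + 1) * (m.factorial : ℝ) * (ξ / (m + 1) * ∫ _ in simplex m, (1 : ℝ))
        = ξ * ((m.factorial : ℝ) * ∫ _ in simplex m, (1 : ℝ)) := by field_simp
      _ = ξ := by rw [hv, mul_one]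
  · intro t ht h hh
    exact Elem.gpdQ_scale hξ hσ (hh.2 a).1 (hh.1 hab) ht.1
end

section
/- Let n ≥ 3, let I, J be integers with 1 ≤ I and I + 2 ≤ J ≤ n, let μ ∈ ℝ and σ > 0, and set u_0(t) = μ − σ·log t (the ξ = 0, i.e. exponential, case of the GPD quantile). Then the function g ↦ ξ̂_{IJ}(u_0(g_1), …, u_0(g_n)) is Lebesgue integrable on the simplex Δ_n and n! · ∫_{Δ_n} ξ̂_{IJ}(u_0(g_1), …, u_0(g_n)) dg = 0. That is, each elemental estimator is unbiased at ξ = 0. -/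
open MeasureTheory Real Set

open scoped ENNReal

lemma measurableSet_simplex (n : ℕ) : MeasurableSet (simplex n) := by
  have : simplex n = (⋂ i, ⋂ j, {g : Fin n → ℝ | i < j → g i < g j}) ∩
      ⋂ i, {g : Fin n → ℝ | 0 < g i ∧ g i < 1} := by
    ext g
    simp [simplex, StrictMono]
  rw [this]
  refine (MeasurableSet.iInter fun i => MeasurableSet.iInter fun j => ?_).inter
    (MeasurableSet.iInter fun i => ?_)
  · by_cases h : i < j
    · simpa [h] using measurableSet_lt (measurable_pi_apply i) (measurable_pi_apply j)
    · simp [h]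
  · exact (measurableSet_lt measurable_const (measurable_pi_apply i)).inter
      (measurableSet_lt (measurable_pi_apply i) measurable_const)

lemma measurable_insertNth {n : ℕ} (p : Fin (n + 1)) :
    Measurable (fun z : ℝ × (Fin n → ℝ) => (p.insertNth z.1 z.2 : Fin (n + 1) → ℝ)) :=
  (MeasurableEquiv.piFinSuccAbove (fun _ : Fin (n + 1) => ℝ) p).symm.measurable

/-- Integrating over `ℝ^{n+1}` by separating the coordinate `p`. -/
lemma lintegral_insertNth {n : ℕ} (p : Fin (n + 1)) (F : (Fin (n + 1) → ℝ) → ℝ≥0∞) :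
    ∫⁻ g, F g = ∫⁻ z : ℝ × (Fin n → ℝ), F (p.insertNth z.1 z.2) :=
  (((volume_preserving_piFinSuccAbove (fun _ : Fin (n + 1) => ℝ) p).symm).lintegral_comp_emb
    (MeasurableEquiv.measurableEmbedding _) F).symm

lemma insertNth_mem_simplex {n : ℕ} (p : Fin (n + 1)) (t : ℝ) (g : Fin n → ℝ) :
    (p.insertNth t g : Fin (n + 1) → ℝ) ∈ simplex (n + 1) ↔
      g ∈ simplex n ∧ t ∈ Ioo (0 : ℝ) 1 ∧
      (∀ i : Fin n, i.castSucc < p → g i < t) ∧ (∀ i : Fin n, p ≤ i.castSucc → t < g i) := by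
  simp only [simplex, mem_ofPred_eq, p.forall_iff_succAbove, Fin.insertNth_apply_same,
    Fin.insertNth_apply_succAbove, mem_Ioo]
  have key : StrictMono (p.insertNth t g : Fin (n + 1) → ℝ) ↔ StrictMono g ∧
      (∀ i : Fin n, i.castSucc < p → g i < t) ∧ (∀ i : Fin n, p ≤ i.castSucc → t < g i) := by
    simp only [StrictMono, p.forall_iff_succAbove, Fin.insertNth_apply_same,
      Fin.insertNth_apply_succAbove, lt_self_iff_false, false_imp_iff, true_and,
      Fin.succAbove_lt_iff_castSucc_lt, Fin.lt_succAbove_iff_le_castSucc,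
      Fin.succAbove_lt_succAbove_iff]
    constructor
    · rintro ⟨h1, h2⟩
      exact ⟨fun a b h => (h2 a).2 b h, fun i => (h2 i).1, h1⟩
    · rintro ⟨h1, h2, h3⟩
      exact ⟨h3, fun i => ⟨h2 i, fun j h => h1 h⟩⟩
  rw [key]
  tauto

/-- Each point outside the tuple has exactly one insertion position. -/
lemma sum_indicator_insertNth {n : ℕ} (t : ℝ) (g : Fin n → ℝ) (hg : g ∈ simplex n)
    (ht : t ∈ Ioo (0 : ℝ) 1) (htg : t ∉ range g) :
    ∃! p : Fin (n + 1), (p.insertNth t g : Fin (n + 1) → ℝ) ∈ simplex (n + 1) := by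
  classical
  have hex : ∃ k, ∀ h : k < n, t < g ⟨k, h⟩ := ⟨n, fun h => absurd h (lt_irrefl _)⟩
  have hle : Nat.find hex ≤ n := Nat.find_min' hex (fun h => absurd h (lt_irrefl _))
  refine ⟨⟨Nat.find hex, by omega⟩, ?_, ?_⟩
  · simp only [insertNth_mem_simplex]
    refine ⟨hg, ht, fun i hi => ?_, fun i hi => ?_⟩
    · have := Nat.find_min hex (m := i) hi
      push Not at this
      obtain ⟨_, h⟩ := this
      exact lt_of_le_of_ne h (fun h' => htg ⟨i, h'⟩)
    · have hi' : Nat.find hex ≤ i := hi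
      have := Nat.find_spec hex (lt_of_le_of_lt hi' i.2)
      exact this.trans_le (hg.1.monotone hi)
  · intro p hp
    rw [insertNth_mem_simplex] at hp
    obtain ⟨-, -, h1, h2⟩ := hp
    apply Fin.ext
    symm
    rw [Nat.find_eq_iff]
    refine ⟨fun h => h2 ⟨p, h⟩ le_rfl, fun k hk h => ?_⟩
    have hkn : k < n := by omega
    exact lt_asymm (h hkn) (h1 ⟨k, hkn⟩ hk)

lemma setLIntegral_insertNth {n : ℕ} (p : Fin (n + 1)) (F : (Fin (n + 1) → ℝ) → ℝ≥0∞) :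
    ∫⁻ g in simplex (n + 1), F g = ∫⁻ z : ℝ × (Fin n → ℝ),
      (simplex (n + 1)).indicator F (p.insertNth z.1 z.2) := by
  rw [← lintegral_indicator (measurableSet_simplex _), lintegral_insertNth p]

/-- The order-statistics recurrence. -/
lemma recurrence (m : ℕ) (a : Fin m) (f : ℝ → ℝ≥0∞) (hf : Measurable f) :
    ∫⁻ g in simplex m, f (g a) =
      ((m - a : ℕ) : ℝ≥0∞) * (∫⁻ g in simplex (m + 1), f (g a.castSucc)) +
      ((a + 1 : ℕ) : ℝ≥0∞) * ∫⁻ g in simplex (m + 1), f (g a.succ) := by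
  have h1 : ∀ p : Fin (m + 1), ∫⁻ g in simplex (m + 1), f (g (p.succAbove a)) =
      ∫⁻ g : Fin m → ℝ, ∫⁻ t : ℝ, (simplex (m + 1)).indicator (fun _ => f (g a))
        (p.insertNth t g) := by
    intro p
    rw [setLIntegral_insertNth p, Measure.volume_eq_prod, lintegral_prod_symm]
    · refine lintegral_congr fun g => lintegral_congr fun t => ?_
      simp [indicator]
    · refine Measurable.aemeasurable ?_
      exact (Measurable.indicator (hf.comp (measurable_pi_apply _))
        (measurableSet_simplex _)).comp (measurable_insertNth p)
  have h2 : ∑ p : Fin (m + 1), ∫⁻ g in simplex (m + 1), f (g (p.succAbove a)) =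
      ∫⁻ g in simplex m, f (g a) := by
    have hmeas : ∀ (p : Fin (m + 1)), Measurable (fun z : ℝ × (Fin m → ℝ) =>
        (simplex (m + 1)).indicator (fun _ => f (z.2 a)) (p.insertNth z.1 z.2)) := by
      intro p
      have : MeasurableSet {z : ℝ × (Fin m → ℝ) |
          (p.insertNth z.1 z.2 : Fin (m + 1) → ℝ) ∈ simplex (m + 1)} :=
        measurable_insertNth p (measurableSet_simplex _)
      exact Measurable.indicator (hf.comp ((measurable_pi_apply a).comp measurable_snd)) this
    simp_rw [h1]
    rw [← lintegral_finsetSum, ← lintegral_indicator (measurableSet_simplex _)]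
    · refine lintegral_congr fun g => ?_
      rw [← lintegral_finsetSum]
      · by_cases hg : g ∈ simplex m
        · have : ∀ᵐ t : ℝ, ∑ p : Fin (m + 1), (simplex (m + 1)).indicator (fun _ => f (g a))
              (p.insertNth t g) = (Ioo (0 : ℝ) 1).indicator (fun _ => f (g a)) t := by
            have hnull : ∀ᵐ t : ℝ, t ∉ range g :=
              (Set.finite_range g).countable.ae_notMem _
            filter_upwards [hnull] with t ht
            by_cases h01 : t ∈ Ioo (0 : ℝ) 1
            · obtain ⟨p, hp, hu⟩ := sum_indicator_insertNth t g hg h01 ht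
              rw [Finset.sum_eq_single p]
              · rw [indicator_of_mem hp, indicator_of_mem h01]
              · intro q _ hq
                exact indicator_of_notMem (fun h => hq (hu q h)) _
              · simp
            · rw [indicator_of_notMem h01]
              refine Finset.sum_eq_zero fun p _ => indicator_of_notMem (fun h => h01 ?_) _
              exact ((insertNth_mem_simplex p t g).1 h).2.1
          rw [lintegral_congr_ae this, lintegral_indicator measurableSet_Ioo,
            indicator_of_mem hg]
          simp
        · rw [indicator_of_notMem hg]
          refine (lintegral_congr fun t => ?_).trans lintegral_zero
          refine Finset.sum_eq_zero fun p _ => indicator_of_notMem (fun h => hg ?_) _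
          exact ((insertNth_mem_simplex p t g).1 h).1
      · intro p _
        exact (hmeas p).comp (measurable_id.prodMk measurable_const)
    · intro p _
      exact Measurable.lintegral_prod_left' (hmeas p)
  rw [← h2]
  have h3 : ∀ p : Fin (m + 1), ∫⁻ g in simplex (m + 1), f (g (p.succAbove a)) =
      if a.castSucc < p then ∫⁻ g in simplex (m + 1), f (g a.castSucc)
      else ∫⁻ g in simplex (m + 1), f (g a.succ) := by
    intro p
    split_ifs with h
    · rw [Fin.succAbove_of_castSucc_lt p a h]
    · rw [Fin.succAbove_of_le_castSucc p a (not_lt.1 h)]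
  simp_rw [h3]
  rw [Finset.sum_ite, Finset.sum_const, Finset.sum_const, nsmul_eq_mul, nsmul_eq_mul]
  have c1 : (Finset.univ.filter fun p : Fin (m + 1) => a.castSucc < p).card = m - a := by
    rw [Finset.filter_lt_eq_Ioi, Fin.card_Ioi]; simp
  have c2 : (Finset.univ.filter fun p : Fin (m + 1) => ¬ a.castSucc < p).card = a + 1 := by
    simp_rw [not_lt]
    rw [Finset.filter_ge_eq_Iic, Fin.card_Iic]; simp
  rw [c1, c2]

/-- Peeling off the largest coordinate. -/
lemma peel (n : ℕ) (F : (Fin (n + 1) → ℝ) → ℝ≥0∞) (hF : Measurable F) :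
    ∫⁻ g in simplex (n + 1), F g = ∫⁻ t in Ioo (0 : ℝ) 1,
      ENNReal.ofReal (t ^ n) * ∫⁻ g in simplex n, F ((Fin.last n).insertNth t (t • g)) := by
  rw [setLIntegral_insertNth (Fin.last n), Measure.volume_eq_prod, lintegral_prod,
    ← lintegral_indicator measurableSet_Ioo]
  · refine lintegral_congr fun t => ?_
    by_cases ht : t ∈ Ioo (0 : ℝ) 1
    · rw [indicator_of_mem ht]
      have hm := Measure.map_addHaar_smul (volume : Measure (Fin n → ℝ)) ht.1.ne'
      have hG : Measurable fun g : Fin n → ℝ => (simplex (n + 1)).indicator F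
          ((Fin.last n).insertNth t g) :=
        (hF.indicator (measurableSet_simplex _)).comp
          ((measurable_insertNth _).comp (measurable_const.prodMk measurable_id))
      have h1 := congrArg (fun ν => ∫⁻ g, (simplex (n + 1)).indicator F
          ((Fin.last n).insertNth t g) ∂ν) hm
      simp only [lintegral_smul_measure] at h1
      rw [lintegral_map hG (measurable_const_smul t)] at h1
      have hpos : 0 < t ^ n := pow_pos ht.1 n
      have h2 : ∫⁻ g, (simplex (n + 1)).indicator F ((Fin.last n).insertNth t (t • g)) =
          ∫⁻ g in simplex n, F ((Fin.last n).insertNth t (t • g)) := by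
        rw [← lintegral_indicator (measurableSet_simplex _)]
        refine lintegral_congr fun g => ?_
        have hiff : ((Fin.last n).insertNth t (t • g) : Fin (n + 1) → ℝ) ∈ simplex (n + 1) ↔
            g ∈ simplex n := by
          rw [insertNth_mem_simplex]
          have e1 : ∀ i, (t * g i < t ↔ g i < 1) := fun i => by
            rw [mul_lt_iff_lt_one_right ht.1]
          have e2 : ∀ i, (0 < t * g i ↔ 0 < g i) := fun i => mul_pos_iff_of_pos_left ht.1
          have e3 : ∀ i j, (t * g i < t * g j ↔ g i < g j) := fun i j =>
            mul_lt_mul_iff_right₀ ht.1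
          simp only [simplex, mem_ofPred_eq, StrictMono, Pi.smul_apply, smul_eq_mul, e1, e2, e3,
            Fin.castSucc_lt_last, true_imp_iff]
          constructor
          · rintro ⟨⟨a, b⟩, c, d, e⟩
            exact ⟨a, fun i => ⟨(b i).1, d i⟩⟩
          · rintro ⟨a, b⟩
            refine ⟨⟨a, fun i => ⟨(b i).1, ?_⟩⟩, ht, fun i => (b i).2, fun i hi => ?_⟩
            · exact ((e1 i).2 (b i).2).trans ht.2
            · exact absurd hi (not_le.2 (Fin.castSucc_lt_last i))
        by_cases hgs : g ∈ simplex n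
        · rw [indicator_of_mem hgs, indicator_of_mem (hiff.2 hgs)]
        · rw [indicator_of_notMem hgs, indicator_of_notMem (fun h => hgs (hiff.1 h))]
      rw [← h2, h1, smul_eq_mul, ← mul_assoc, Module.finrank_fin_fun,
        abs_of_pos (inv_pos.2 hpos), ← ENNReal.ofReal_mul hpos.le, mul_inv_cancel₀ hpos.ne',
        ENNReal.ofReal_one, one_mul]
    · rw [indicator_of_notMem ht]
      refine (lintegral_congr fun g => ?_).trans lintegral_zero
      exact indicator_of_notMem (fun h => ht ((insertNth_mem_simplex _ t g).1 h).2.1) _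
  · exact ((hF.indicator (measurableSet_simplex _)).comp (measurable_insertNth _)).aemeasurable

lemma lintegral_pow (n : ℕ) :
    ∫⁻ t in Ioo (0 : ℝ) 1, ENNReal.ofReal (t ^ n) = ((n + 1 : ℕ) : ℝ≥0∞)⁻¹ := by
  rw [← ofReal_integral_eq_lintegral_ofReal]
  · rw [← integral_Ioc_eq_integral_Ioo, ← intervalIntegral.integral_of_le zero_le_one,
      integral_pow]
    rw [← ENNReal.ofReal_natCast, ← ENNReal.ofReal_inv_of_pos (by positivity)]
    simp
  · exact ((continuous_pow n).integrableOn_Icc (a := 0) (b := 1)).mono_set Ioo_subset_Icc_self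
  · exact (ae_restrict_iff' measurableSet_Ioo).2 (ae_of_all _ fun t ht => pow_nonneg ht.1.le n)

/-- The law of a ratio of two coordinates of the simplex. -/
lemma ratio (n a b : ℕ) (hab : a < b) (hb : b < n) (f : ℝ → ℝ≥0∞) (hf : Measurable f) :
    (n.factorial : ℝ≥0∞) * ∫⁻ g in simplex n, f (g ⟨a, hab.trans hb⟩ / g ⟨b, hb⟩) =
      (b.factorial : ℝ≥0∞) * ∫⁻ g in simplex b, f (g ⟨a, hab⟩) := by
  induction n with
  | zero => omega
  | succ n ih =>
    have hfac : (((n + 1).factorial : ℕ) : ℝ≥0∞) * ((n + 1 : ℕ) : ℝ≥0∞)⁻¹ = n.factorial := by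
      rw [Nat.factorial_succ, Nat.cast_mul, mul_comm, ← mul_assoc,
        ENNReal.inv_mul_cancel (by simp) (by simp), one_mul]
    have hins : ∀ (k : ℕ) (hk : k < n) (t : ℝ) (g : Fin n → ℝ),
        ((Fin.last n).insertNth t (t • g) : Fin (n + 1) → ℝ) ⟨k, by omega⟩ = t * g ⟨k, hk⟩ := by
      intro k hk t g
      have : (⟨k, by omega⟩ : Fin (n + 1)) = (Fin.last n).succAbove ⟨k, hk⟩ := by
        rw [Fin.succAbove_last]; rfl
      rw [this, Fin.insertNth_apply_succAbove]; rfl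
    have hlast : ∀ (t : ℝ) (g : Fin n → ℝ),
        ((Fin.last n).insertNth t (t • g) : Fin (n + 1) → ℝ) ⟨n, by omega⟩ = t := by
      intro t g
      exact Fin.insertNth_apply_same (α := fun _ => ℝ) (Fin.last n) t (t • g)
    rw [peel]
    swap
    · exact hf.comp ((measurable_pi_apply _).div (measurable_pi_apply _))
    rcases Nat.lt_succ_iff_lt_or_eq.1 hb with hbn | rfl
    · rw [← ih hbn, ← hfac, mul_assoc, ← lintegral_pow, ← lintegral_mul_const _ (by fun_prop)]
      congr 1
      refine setLIntegral_congr_fun measurableSet_Ioo fun t ht => ?_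
      simp only [hins a (hab.trans hbn), hins b hbn, mul_div_mul_left _ _ ht.1.ne']
    · rw [← hfac, mul_assoc, ← lintegral_pow, ← lintegral_mul_const _ (by fun_prop)]
      congr 1
      refine setLIntegral_congr_fun measurableSet_Ioo fun t ht => ?_
      simp only [hins a hab, hlast, mul_div_cancel_left₀ _ ht.1.ne']

/-- Bochner version of `ratio`. -/
lemma ratio_integral (n a b : ℕ) (hab : a < b) (hb : b < n) (h : ℝ → ℝ) (hm : Measurable h)
    (hi : IntegrableOn (fun g : Fin b → ℝ => h (g ⟨a, hab⟩)) (simplex b)) :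
    IntegrableOn (fun g : Fin n → ℝ => h (g ⟨a, hab.trans hb⟩ / g ⟨b, hb⟩)) (simplex n) ∧
    (n.factorial : ℝ) * ∫ g in simplex n, h (g ⟨a, hab.trans hb⟩ / g ⟨b, hb⟩) =
      (b.factorial : ℝ) * ∫ g in simplex b, h (g ⟨a, hab⟩) := by
  have hr : Measurable (fun g : Fin n → ℝ => g ⟨a, hab.trans hb⟩ / g ⟨b, hb⟩) :=
    (measurable_pi_apply _).div (measurable_pi_apply _)
  have he : Measurable (fun g : Fin b → ℝ => g ⟨a, hab⟩) := measurable_pi_apply _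
  have hmeas : (n.factorial : ℝ≥0∞) • Measure.map
        (fun g : Fin n → ℝ => g ⟨a, hab.trans hb⟩ / g ⟨b, hb⟩) (volume.restrict (simplex n)) =
      (b.factorial : ℝ≥0∞) • Measure.map (fun g : Fin b → ℝ => g ⟨a, hab⟩)
        (volume.restrict (simplex b)) := by
    ext s hs
    have := ratio n a b hab hb (s.indicator 1) (measurable_one.indicator hs)
    rw [← lintegral_map (measurable_one.indicator hs) hr,
      ← lintegral_map (measurable_one.indicator hs) he, lintegral_indicator_one hs,
      lintegral_indicator_one hs] at this
    simpa using this
  have hn0 : (n.factorial : ℝ≥0∞) ≠ 0 := by simp [Nat.factorial_ne_zero]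
  have hb0 : (b.factorial : ℝ≥0∞) ≠ 0 := by simp [Nat.factorial_ne_zero]
  constructor
  · have h1 : Integrable h ((b.factorial : ℝ≥0∞) • Measure.map (fun g : Fin b → ℝ => g ⟨a, hab⟩)
        (volume.restrict (simplex b))) :=
      ((integrable_map_measure hm.aestronglyMeasurable he.aemeasurable).2 hi).smul_measure
        (by simp)
    rw [← hmeas, integrable_smul_measure hn0 (by simp)] at h1
    exact (integrable_map_measure hm.aestronglyMeasurable hr.aemeasurable).1 h1
  · have h1 := congrArg (fun ν => ∫ x, h x ∂ν) hmeas
    simp only [integral_smul_measure] at h1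
    rw [integral_map hr.aemeasurable hm.aestronglyMeasurable,
      integral_map he.aemeasurable hm.aestronglyMeasurable] at h1
    simpa using h1

/-- Bochner version of `recurrence`. -/
lemma recurrence_integral (m a : ℕ) (ha : a < m) (h : ℝ → ℝ) (hm : Measurable h)
    (h1 : IntegrableOn (fun g : Fin (m + 1) → ℝ => h (g ⟨a, by omega⟩)) (simplex (m + 1)))
    (h2 : IntegrableOn (fun g : Fin (m + 1) → ℝ => h (g ⟨a + 1, by omega⟩)) (simplex (m + 1))) :
    ∫ g in simplex m, h (g ⟨a, ha⟩) =
      ((m - a : ℕ) : ℝ) * (∫ g in simplex (m + 1), h (g ⟨a, by omega⟩)) +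
      ((a + 1 : ℕ) : ℝ) * ∫ g in simplex (m + 1), h (g ⟨a + 1, by omega⟩) := by
  have e0 : Measurable (fun g : Fin m → ℝ => g ⟨a, ha⟩) := measurable_pi_apply _
  have e1 : Measurable (fun g : Fin (m + 1) → ℝ => g ⟨a, by omega⟩) := measurable_pi_apply _
  have e2 : Measurable (fun g : Fin (m + 1) → ℝ => g ⟨a + 1, by omega⟩) := measurable_pi_apply _
  have hmeas : Measure.map (fun g : Fin m → ℝ => g ⟨a, ha⟩) (volume.restrict (simplex m)) =
      ((m - a : ℕ) : ℝ≥0∞) • Measure.map (fun g : Fin (m + 1) → ℝ => g ⟨a, by omega⟩)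
        (volume.restrict (simplex (m + 1))) +
      ((a + 1 : ℕ) : ℝ≥0∞) • Measure.map (fun g : Fin (m + 1) → ℝ => g ⟨a + 1, by omega⟩)
        (volume.restrict (simplex (m + 1))) := by
    ext s hs
    have hs1 : Measurable (s.indicator (1 : ℝ → ℝ≥0∞)) := measurable_one.indicator hs
    have := recurrence m ⟨a, ha⟩ (s.indicator 1) hs1
    simp only [Fin.castSucc_mk, Fin.succ_mk] at this
    rw [← lintegral_map hs1 e0, ← lintegral_map hs1 e1, ← lintegral_map hs1 e2,
      lintegral_indicator_one hs, lintegral_indicator_one hs, lintegral_indicator_one hs] at this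
    simpa using this
  have i1 := ((integrable_map_measure hm.aestronglyMeasurable e1.aemeasurable).2 h1).smul_measure
    (c := ((m - a : ℕ) : ℝ≥0∞)) (by simp)
  have i2 := ((integrable_map_measure hm.aestronglyMeasurable e2.aemeasurable).2 h2).smul_measure
    (c := ((a + 1 : ℕ) : ℝ≥0∞)) (by simp)
  have key := congrArg (fun ν => ∫ x, h x ∂ν) hmeas
  rw [integral_add_measure i1 i2, integral_smul_measure, integral_smul_measure,
    integral_map e0.aemeasurable hm.aestronglyMeasurable,
    integral_map e1.aemeasurable hm.aestronglyMeasurable,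
    integral_map e2.aemeasurable hm.aestronglyMeasurable, ENNReal.toReal_natCast,
    ENNReal.toReal_natCast] at key
  simpa only [smul_eq_mul] using key

lemma integrableOn_coord (m : ℕ) (a : Fin m) (h : ℝ → ℝ) (hi : IntegrableOn h (Ioo 0 1)) :
    IntegrableOn (fun g : Fin m → ℝ => h (g a)) (simplex m) := by
  have hsub : simplex m ⊆ Set.pi univ (fun _ => Ioo (0 : ℝ) 1) := fun g hg i _ => hg.2 i
  refine IntegrableOn.mono_set ?_ hsub
  rw [IntegrableOn, volume_pi, Measure.restrict_pi_pi]
  exact integrable_comp_eval (μ := fun _ : Fin m => (volume : Measure ℝ).restrict (Ioo 0 1))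
    (i := a) hi

lemma measurable_loglog : Measurable (fun v : ℝ => Real.log (-Real.log v)) :=
  Real.measurable_log.comp Real.measurable_log.neg

lemma integrableOn_loglog : IntegrableOn (fun v : ℝ => Real.log (-Real.log v)) (Ioo 0 1) := by
  have h1 : IntervalIntegrable (fun v : ℝ => Real.log v) volume 0 1 :=
    intervalIntegral.intervalIntegrable_log'
  have h2 : IntervalIntegrable (fun v : ℝ => Real.log (1 - v)) volume 0 1 := by
    have := (h1.comp_sub_left 1).symm
    simpa using this
  have h3 : IntegrableOn (fun v : ℝ => -Real.log v - Real.log (1 - v)) (Ioo 0 1) := by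
    have := (h1.neg.sub h2)
    rw [intervalIntegrable_iff_integrableOn_Ioo_of_le zero_le_one] at this
    exact this
  refine h3.mono' measurable_loglog.aestronglyMeasurable ?_
  refine (ae_restrict_iff' measurableSet_Ioo).2 (ae_of_all _ fun v hv => ?_)
  have l1 : Real.log v ≤ v - 1 := Real.log_le_sub_one_of_pos hv.1
  have l2 : Real.log (1 - v) ≤ 0 := Real.log_nonpos (by linarith [hv.2]) (by linarith [hv.1])
  have hpos : 0 < 1 - v := by linarith [hv.2]
  have l3 : Real.log (-Real.log v) ≤ -Real.log v - 1 :=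
    Real.log_le_sub_one_of_pos (by linarith)
  have l4 : Real.log (1 - v) ≤ Real.log (-Real.log v) := Real.log_le_log hpos (by linarith)
  rw [Real.norm_eq_abs, abs_le]
  constructor <;> linarith

/-- Each elemental estimator is unbiased at `ξ = 0`, where the GPD quantile function
is the exponential one `u_0(t) = μ - σ log t`. -/
theorem elemental_unbiased_xi_zero (n I J : ℕ) (hn : 3 ≤ n) (hI : 1 ≤ I)
    (hIJ : I + 2 ≤ J) (hJn : J ≤ n) (μ σ : ℝ) (hσ : 0 < σ) :
    IntegrableOn
      (fun g => elemental I J (sample n (fun t => μ - σ * Real.log t) g)) (simplex n) volume ∧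
    (n.factorial : ℝ) *
      ∫ g in simplex n, elemental I J (sample n (fun t => μ - σ * Real.log t) g) = 0 := by
  obtain ⟨a, rfl⟩ : ∃ a, I = a + 1 := ⟨I - 1, by omega⟩
  obtain ⟨m, rfl⟩ : ∃ m, J = m + 2 := ⟨J - 2, by omega⟩
  have ham : a < m := by omega
  set h : ℝ → ℝ := fun v => Real.log (-Real.log v) with hh
  have hm : Measurable h := measurable_loglog
  have hc : ∀ (k : ℕ) (i : Fin k), IntegrableOn (fun g : Fin k → ℝ => h (g i)) (simplex k) :=
    fun k i => integrableOn_coord k i h integrableOn_loglog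
  obtain ⟨i1, r1⟩ := ratio_integral n a m ham (by omega) h hm (hc _ _)
  obtain ⟨i2, r2⟩ := ratio_integral n a (m + 1) (by omega) (by omega) h hm (hc _ _)
  obtain ⟨i3, r3⟩ := ratio_integral n (a + 1) (m + 1) (by omega) (by omega) h hm (hc _ _)
  have hrec := recurrence_integral m a ham h hm (hc _ _) (hc _ _)
  have hlog : ∀ g ∈ simplex n, ∀ i j : Fin n, i < j →
      Real.log ((μ - σ * Real.log (g i)) - (μ - σ * Real.log (g j))) =
        Real.log σ + h (g i / g j) := by
    intro g hg i j hij
    have hi := (hg.2 i).1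
    have hj := (hg.2 j).1
    have hlt : Real.log (g i) < Real.log (g j) := Real.log_lt_log hi (hg.1 hij)
    have e : (μ - σ * Real.log (g i)) - (μ - σ * Real.log (g j)) =
        σ * (-Real.log (g i / g j)) := by
      rw [Real.log_div hi.ne' hj.ne']; ring
    rw [e, Real.log_mul hσ.ne']
    rw [Real.log_div hi.ne' hj.ne']
    linarith
  have heq : EqOn (fun g => elemental (a + 1) (m + 2)
        (sample n (fun t => μ - σ * Real.log t) g))
      (fun g => ((m : ℝ) + 1) * h (g ⟨a, by omega⟩ / g ⟨m, by omega⟩)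
        - ((m : ℝ) - a) * h (g ⟨a, by omega⟩ / g ⟨m + 1, by omega⟩)
        - ((a : ℝ) + 1) * h (g ⟨a + 1, by omega⟩ / g ⟨m + 1, by omega⟩)) (simplex n) := by
    intro g hg
    have s1 : sample n (fun t => μ - σ * Real.log t) g (a + 1) =
        μ - σ * Real.log (g ⟨a, by omega⟩) := dif_pos (by omega)
    have s2 : sample n (fun t => μ - σ * Real.log t) g (m + 2 - 1) =
        μ - σ * Real.log (g ⟨m, by omega⟩) := dif_pos (by omega)
    have s3 : sample n (fun t => μ - σ * Real.log t) g (m + 2) =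
        μ - σ * Real.log (g ⟨m + 1, by omega⟩) := dif_pos (by omega)
    have s4 : sample n (fun t => μ - σ * Real.log t) g (a + 1 + 1) =
        μ - σ * Real.log (g ⟨a + 1, by omega⟩) := dif_pos (by omega)
    simp only [elemental]
    rw [s1, s2, s3, s4, hlog g hg _ _ (Fin.mk_lt_mk.2 ham),
      hlog g hg _ _ (Fin.mk_lt_mk.2 (by omega)), hlog g hg _ _ (Fin.mk_lt_mk.2 (by omega))]
    push_cast
    ring
  have j1 := i1.const_mul ((m : ℝ) + 1)
  have j2 := i2.const_mul ((m : ℝ) - a)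
  have j3 := i3.const_mul ((a : ℝ) + 1)
  constructor
  · exact IntegrableOn.congr_fun ((j1.sub j2).sub j3) (fun g hg => (heq hg).symm) (measurableSet_simplex n)
  · rw [setIntegral_congr_fun (measurableSet_simplex n) heq]
    have k1 := integral_sub (j1.sub j2) j3
    have k2 := integral_sub j1 j2
    simp only [Pi.sub_apply] at k1
    rw [k1, k2, integral_const_mul, integral_const_mul, integral_const_mul]
    rw [hrec] at r1
    rw [Nat.factorial_succ] at r2 r3
    push_cast [Nat.cast_sub ham.le] at r1 r2 r3
    linear_combination ((m : ℝ) + 1) * r1 - ((m : ℝ) - a) * r2 - ((a : ℝ) + 1) * r3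
end

section
/- Let n ≥ 3, let I, J be integers with 1 ≤ I and I + 2 ≤ J ≤ n, let μ ∈ ℝ, σ > 0 and ξ ≠ 0. For integers 1 ≤ i < j ≤ n define L(i,j) = (n!/((i−1)!·(n−j)!·(j−i−1)!)) · ∫₀¹ ∫₀^y x^{i−1}·(1−y)^{n−j}·(y−x)^{j−i−1}·log(u_ξ(x) − u_ξ(y)) dx dy. Then (J−1)·L(I, J−1) − (J−1−I)·L(I, J) − I·L(I+1, J) = ξ. -/
open MeasureTheory Real Set

/-- `L(i,j)`: the expected value of `log (X_i - X_j)` for the `i`-th and `j`-th largest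
order statistics of an i.i.d. sample of size `n` with quantile function `u`, i.e.
`(n!/((i−1)!(n−j)!(j−i−1)!)) ∫₀¹∫₀^y x^{i−1}(1−y)^{n−j}(y−x)^{j−i−1} log(u(x) − u(y)) dx dy`. -/
noncomputable def Lfun (n i j : ℕ) (u : ℝ → ℝ) : ℝ :=
  ((n.factorial : ℝ) /
      ((i - 1).factorial * (n - j).factorial * (j - i - 1).factorial)) *
    ∫ y in Set.Ioo (0 : ℝ) 1, ∫ x in Set.Ioo (0 : ℝ) y,
      x ^ (i - 1) * (1 - y) ^ (n - j) * (y - x) ^ (j - i - 1) * Real.log (u x - u y)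

namespace Elem

noncomputable def b (p q : ℕ) : ℝ := ∫ s in (0:ℝ)..1, s ^ p * (1 - s) ^ q
noncomputable def D (p q : ℕ) : ℝ := ∫ s in (0:ℝ)..1, s ^ p * (1 - s) ^ q * Real.log s
noncomputable def g (σ ξ s : ℝ) : ℝ := Real.log (σ / ξ * (s ^ (-ξ) - 1))
noncomputable def G (σ ξ : ℝ) (p q : ℕ) : ℝ := ∫ s in (0:ℝ)..1, s ^ p * (1 - s) ^ q * g σ ξ s

lemma b_int (p q : ℕ) : IntervalIntegrable (fun s : ℝ => s ^ p * (1 - s) ^ q) volume 0 1 :=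
  Continuous.intervalIntegrable (by fun_prop) _ _

lemma D_int (p q : ℕ) :
    IntervalIntegrable (fun s : ℝ => s ^ p * (1 - s) ^ q * Real.log s) volume 0 1 :=
  (intervalIntegral.intervalIntegrable_log').continuousOn_mul
    (Continuous.continuousOn (by fun_prop))

lemma b_rec (p q : ℕ) : ((p:ℝ) + 1) * b p (q + 1) = (q + 1) * b (p + 1) q := by
  have h := intervalIntegral.integral_eq_sub_of_hasDerivAt (a := 0) (b := 1)
    (f := fun s : ℝ => s ^ (p + 1) * (1 - s) ^ (q + 1))
    (f' := fun s : ℝ => (p + 1) * (s ^ p * (1 - s) ^ (q + 1)) -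
      (q + 1) * (s ^ (p + 1) * (1 - s) ^ q)) (by
      intro x _
      have h1 := (hasDerivAt_pow (p + 1) x).mul (((hasDerivAt_id x).const_sub 1).pow (q + 1))
      refine HasDerivAt.congr_deriv h1 ?_
      simp only [Pi.pow_apply, Pi.mul_apply, id_eq, Nat.add_sub_cancel]
      push_cast
      ring) (Continuous.intervalIntegrable (by fun_prop) _ _)
  rw [intervalIntegral.integral_sub ((b_int _ _).const_mul _) ((b_int _ _).const_mul _),
    intervalIntegral.integral_const_mul, intervalIntegral.integral_const_mul] at h
  simp at h
  unfold b
  linarith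

lemma b_eq (p q : ℕ) : b p q = p.factorial * q.factorial / (p + q + 1).factorial := by
  induction q generalizing p with
  | zero =>
    simp [b, integral_pow, Nat.factorial_succ]
    field_simp
  | succ q ih =>
    have h := b_rec p q
    rw [ih (p + 1)] at h
    have e : p + (q + 1) + 1 = p + 1 + q + 1 := by ring
    rw [e]
    have hp : (p:ℝ) + 1 ≠ 0 := by positivity
    apply mul_left_cancel₀ hp
    rw [h, Nat.factorial_succ p, Nat.factorial_succ q]
    push_cast
    ring

lemma D_rec (m q : ℕ) : ((m:ℝ) + 1) * D m (q + 1) - (q + 1) * D (m + 1) q + b m (q + 1) = 0 := by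
  have hi : IntervalIntegrable (fun s : ℝ => (m + 1) * (s ^ m * (1 - s) ^ (q + 1) * Real.log s) -
      (q + 1) * (s ^ (m + 1) * (1 - s) ^ q * Real.log s)) volume 0 1 :=
    ((D_int _ _).const_mul _).sub ((D_int _ _).const_mul _)
  have h := intervalIntegral.integral_eq_sub_of_hasDerivAt_of_le (a := 0) (b := 1) zero_le_one
    (f := fun s : ℝ => s ^ (m + 1) * (1 - s) ^ (q + 1) * Real.log s)
    (f' := fun s : ℝ => ((m + 1) * (s ^ m * (1 - s) ^ (q + 1) * Real.log s) -
      (q + 1) * (s ^ (m + 1) * (1 - s) ^ q * Real.log s)) + s ^ m * (1 - s) ^ (q + 1))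
    (by
      have : (fun s : ℝ => s ^ (m + 1) * (1 - s) ^ (q + 1) * Real.log s) =
        fun s : ℝ => s ^ m * (1 - s) ^ (q + 1) * (s * Real.log s) := by
        funext s; ring
      rw [this]
      have := Real.continuous_mul_log
      exact Continuous.continuousOn (by fun_prop))
    (by
      intro x hx
      have hx0 : x ≠ 0 := hx.1.ne'
      have h1 := ((hasDerivAt_pow (m + 1) x).mul
        (((hasDerivAt_id x).const_sub 1).pow (q + 1))).mul (Real.hasDerivAt_log hx0)
      refine HasDerivAt.congr_deriv h1 ?_
      simp only [Pi.pow_apply, Pi.mul_apply, id_eq, Nat.add_sub_cancel]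
      push_cast
      field_simp
      ring) (hi.add (b_int _ _))
  rw [intervalIntegral.integral_add hi (b_int _ _),
    intervalIntegral.integral_sub ((D_int _ _).const_mul _) ((D_int _ _).const_mul _),
    intervalIntegral.integral_const_mul, intervalIntegral.integral_const_mul] at h
  simp at h
  unfold D b
  linarith

lemma one_sub_rpow_bound {a : ℝ} (ha : 0 < a) {s : ℝ} (hs : s ∈ Set.Ioo (0:ℝ) 1) :
    min 1 a * (1 - s) ≤ 1 - s ^ a := by
  have h1 : 0 < 1 - s := by linarith [hs.2]
  rcases le_total 1 a with h | h
  · rw [min_eq_left h]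
    have := Real.rpow_le_rpow_of_exponent_ge hs.1 hs.2.le h
    rw [Real.rpow_one] at this
    linarith
  · rw [min_eq_right h]
    have := rpow_one_add_le_one_add_mul_self (s := s - 1) (by linarith [hs.1]) ha.le h
    rw [show 1 + (s - 1) = s by ring] at this
    linarith

lemma log_one_sub_int {a : ℝ} (ha : 0 < a) :
    IntervalIntegrable (fun s : ℝ => Real.log (1 - s ^ a)) volume 0 1 := by
  have h1 : IntervalIntegrable (fun s : ℝ => Real.log (1 - s)) volume 0 1 := by
    have := (intervalIntegral.intervalIntegrable_log' (a := 0) (b := 1)).comp_sub_left 1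
    simpa using this.symm
  have h2 : IntervalIntegrable (fun s : ℝ => |Real.log (min 1 a)| + |Real.log (1 - s)|)
    volume 0 1 := intervalIntegrable_const.add h1.abs
  rw [intervalIntegrable_iff_integrableOn_Ioo_of_le zero_le_one] at h2 ⊢
  refine Integrable.mono' h2 ?_ ?_
  · exact (by fun_prop : Measurable (fun s : ℝ => Real.log (1 - s ^ a))).aestronglyMeasurable
  · refine (ae_restrict_iff' measurableSet_Ioo).2 (Filter.Eventually.of_forall fun s hs => ?_)
    have hb := one_sub_rpow_bound ha hs
    have h0 : 0 < 1 - s := by linarith [hs.2]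
    have hm : 0 < min 1 a := lt_min one_pos ha
    have h3 := Real.log_le_log (mul_pos hm h0) hb
    rw [Real.log_mul hm.ne' h0.ne'] at h3
    have h4 : Real.log (1 - s ^ a) ≤ 0 :=
      Real.log_nonpos ((mul_pos hm h0).le.trans hb) (by linarith [Real.rpow_pos_of_pos hs.1 a])
    rw [Real.norm_eq_abs, abs_of_nonpos h4]
    linarith [neg_abs_le (Real.log (min 1 a)), neg_abs_le (Real.log (1 - s))]

lemma g_int0 {σ ξ : ℝ} (hσ : 0 < σ) (hξ : ξ ≠ 0) : IntervalIntegrable (g σ ξ) volume 0 1 := by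
  have key : ∃ c d a : ℝ, 0 < a ∧ ∀ s ∈ Set.Ioo (0:ℝ) 1,
      g σ ξ s = c + d * Real.log s + Real.log (1 - s ^ a) := by
    rcases lt_or_gt_of_ne hξ with h | h
    · refine ⟨Real.log (σ / (-ξ)), 0, -ξ, by linarith, fun s hs => ?_⟩
      have h1 : s ^ (-ξ) < 1 := Real.rpow_lt_one hs.1.le hs.2 (by linarith)
      have h2 : 0 < σ / (-ξ) := div_pos hσ (by linarith)
      rw [g, zero_mul, add_zero, ← Real.log_mul h2.ne' (by linarith)]
      congr 1
      field_simp
      ring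
    · refine ⟨Real.log (σ / ξ), -ξ, ξ, h, fun s hs => ?_⟩
      have h1 : s ^ ξ < 1 := Real.rpow_lt_one hs.1.le hs.2 h
      have h2 : 0 < σ / ξ := div_pos hσ h
      have h3 := Real.rpow_pos_of_pos hs.1 (-ξ)
      rw [g, ← Real.log_rpow hs.1, ← Real.log_mul h2.ne' h3.ne',
        ← Real.log_mul (mul_pos h2 h3).ne' (by linarith)]
      congr 1
      have h4 : s ^ (-ξ) * s ^ ξ = 1 := by rw [← Real.rpow_add hs.1]; simp
      linear_combination (-σ / ξ) * (-h4)
  obtain ⟨c, d, a, ha, hk⟩ := key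
  have hI : IntervalIntegrable (fun s : ℝ => c + d * Real.log s + Real.log (1 - s ^ a))
      volume 0 1 := (intervalIntegrable_const.add
        ((intervalIntegral.intervalIntegrable_log').const_mul d)).add (log_one_sub_int ha)
  rw [intervalIntegrable_iff_integrableOn_Ioo_of_le zero_le_one] at hI ⊢
  exact hI.congr_fun (fun s hs => (hk s hs).symm) measurableSet_Ioo

lemma g_int {σ ξ : ℝ} (hσ : 0 < σ) (hξ : ξ ≠ 0) (p q : ℕ) :
    IntervalIntegrable (fun s : ℝ => s ^ p * (1 - s) ^ q * g σ ξ s) volume 0 1 :=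
  (g_int0 hσ hξ).continuousOn_mul (Continuous.continuousOn (by fun_prop))

lemma G_rec {σ ξ : ℝ} (hσ : 0 < σ) (hξ : ξ ≠ 0) (p r : ℕ) :
    G σ ξ p r = G σ ξ p (r + 1) + G σ ξ (p + 1) r := by
  unfold G
  rw [← intervalIntegral.integral_add (g_int hσ hξ _ _) (g_int hσ hξ _ _)]
  congr 1
  funext s
  ring

lemma inner_eq {μ σ ξ : ℝ} (hσ : 0 < σ) (hξ : ξ ≠ 0) (p q r : ℕ) {y : ℝ}
    (hy : y ∈ Set.Ioo (0:ℝ) 1) :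
    ∫ x in Set.Ioo (0 : ℝ) y, x ^ p * (1 - y) ^ q * (y - x) ^ r *
        Real.log (gpdQ μ σ ξ x - gpdQ μ σ ξ y) =
      (-ξ * b p r) * (y ^ (p + r + 1) * (1 - y) ^ q * Real.log y) +
        G σ ξ p r * (y ^ (p + r + 1) * (1 - y) ^ q) := by
  rw [← integral_Ioc_eq_integral_Ioo, ← intervalIntegral.integral_of_le hy.1.le]
  have h := intervalIntegral.smul_integral_comp_mul_right (a := 0) (b := 1)
    (fun x : ℝ => x ^ p * (1 - y) ^ q * (y - x) ^ r *
        Real.log (gpdQ μ σ ξ x - gpdQ μ σ ξ y)) y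
  rw [zero_mul, one_mul] at h
  rw [← h, smul_eq_mul]
  have h2 : ∫ s in (0:ℝ)..1, (s * y) ^ p * (1 - y) ^ q * (y - s * y) ^ r *
        Real.log (gpdQ μ σ ξ (s * y) - gpdQ μ σ ξ y) =
      ∫ s in (0:ℝ)..1, (y ^ (p + r) * (1 - y) ^ q * (-ξ * Real.log y)) * (s ^ p * (1 - s) ^ r) +
        (y ^ (p + r) * (1 - y) ^ q) * (s ^ p * (1 - s) ^ r * g σ ξ s) := by
    rw [intervalIntegral.integral_of_le zero_le_one, intervalIntegral.integral_of_le zero_le_one,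
      integral_Ioc_eq_integral_Ioo, integral_Ioc_eq_integral_Ioo]
    refine setIntegral_congr_fun measurableSet_Ioo fun s hs => ?_
    have e : gpdQ μ σ ξ (s * y) - gpdQ μ σ ξ y = y ^ (-ξ) * (σ / ξ * (s ^ (-ξ) - 1)) := by
      simp only [gpdQ, if_neg hξ]
      rw [Real.mul_rpow hs.1.le hy.1.le]
      ring
    have hne : σ / ξ * (s ^ (-ξ) - 1) ≠ 0 := by
      refine mul_ne_zero (div_ne_zero hσ.ne' hξ) (sub_ne_zero.2 ?_)
      rcases lt_or_gt_of_ne hξ with h | h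
      · exact (Real.rpow_lt_one hs.1.le hs.2 (by linarith)).ne
      · exact (Real.one_lt_rpow_of_pos_of_lt_one_of_neg hs.1 hs.2 (by linarith)).ne'
    have e2 : y - s * y = y * (1 - s) := by ring
    rw [e, Real.log_mul (Real.rpow_pos_of_pos hy.1 _).ne' hne, Real.log_rpow hy.1, e2, ← g,
      mul_pow, mul_pow]
    ring
  rw [h2, intervalIntegral.integral_add ((b_int _ _).const_mul _) ((g_int hσ hξ _ _).const_mul _),
    intervalIntegral.integral_const_mul, intervalIntegral.integral_const_mul, ← b, ← G]
  ring

lemma L_eq {μ σ ξ : ℝ} (hσ : 0 < σ) (hξ : ξ ≠ 0) (p q r : ℕ) :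
    ∫ y in Set.Ioo (0 : ℝ) 1, ∫ x in Set.Ioo (0 : ℝ) y, x ^ p * (1 - y) ^ q * (y - x) ^ r *
        Real.log (gpdQ μ σ ξ x - gpdQ μ σ ξ y) =
      (-ξ * b p r) * D (p + r + 1) q + G σ ξ p r * b (p + r + 1) q := by
  rw [setIntegral_congr_fun measurableSet_Ioo (fun y hy => inner_eq hσ hξ p q r hy),
    ← integral_Ioc_eq_integral_Ioo, ← intervalIntegral.integral_of_le zero_le_one,
    intervalIntegral.integral_add ((D_int _ _).const_mul _) ((b_int _ _).const_mul _),
    intervalIntegral.integral_const_mul, intervalIntegral.integral_const_mul, ← b, ← D]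

end Elem

/-- The elemental combination `(J−1)·L(I,J−1) − (J−1−I)·L(I,J) − I·L(I+1,J)` of expected
log-spacings equals the GPD tail parameter `ξ`. -/
theorem elemental_expectation (n I J : ℕ) (hn : 3 ≤ n) (hI : 1 ≤ I)
    (hIJ : I + 2 ≤ J) (hJn : J ≤ n) (μ σ ξ : ℝ) (hσ : 0 < σ) (hξ : ξ ≠ 0) :
    ((J : ℝ) - 1) * Lfun n I (J - 1) (gpdQ μ σ ξ)
      - ((J : ℝ) - 1 - (I : ℝ)) * Lfun n I J (gpdQ μ σ ξ)
      - (I : ℝ) * Lfun n (I + 1) J (gpdQ μ σ ξ) = ξ := by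
  obtain ⟨p, rfl⟩ : ∃ p, I = p + 1 := ⟨I - 1, by omega⟩
  obtain ⟨r, rfl⟩ : ∃ r, J = p + r + 3 := ⟨J - p - 3, by omega⟩
  obtain ⟨q, rfl⟩ : ∃ q, n = p + r + 3 + q := ⟨n - (p + r + 3), by omega⟩
  unfold Lfun
  rw [show p + 1 - 1 = p by omega, show p + r + 3 + q - (p + r + 3 - 1) = q + 1 by omega,
    show p + r + 3 - 1 - (p + 1) - 1 = r by omega, show p + r + 3 + q - (p + r + 3) = q by omega,
    show p + r + 3 - (p + 1) - 1 = r + 1 by omega, show p + 1 + 1 - 1 = p + 1 by omega,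
    show p + r + 3 - (p + 1 + 1) - 1 = r by omega,
    Elem.L_eq hσ hξ, Elem.L_eq hσ hξ, Elem.L_eq hσ hξ]
  have hD := Elem.D_rec (p + r + 1) q
  have hG := Elem.G_rec hσ hξ p r
  rw [show p + (r + 1) + 1 = p + r + 1 + 1 by ring, show p + 1 + r + 1 = p + r + 1 + 1 by ring]
  have hD' : Elem.D (p + r + 1 + 1) q = (((p + r + 1 : ℕ) + 1 : ℝ) * Elem.D (p + r + 1) (q + 1) +
    Elem.b (p + r + 1) (q + 1)) / (q + 1) := by
    field_simp
    linarith
  rw [hD', hG]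
  simp only [Elem.b_eq]
  rw [show p + r + 1 + (q + 1) + 1 = p + r + 3 + q by ring,
    show p + r + 1 + 1 + q + 1 = p + r + 3 + q by ring,
    show p + (r + 1) + 1 = p + r + 1 + 1 by ring, show p + 1 + r + 1 = p + r + 1 + 1 by ring,
    Nat.factorial_succ (p + r + 1), Nat.factorial_succ p, Nat.factorial_succ q,
    Nat.factorial_succ r]
  have f1 : ((p + r + 3 + q).factorial : ℝ) ≠ 0 := by positivity
  have f2 : ((p + r + 1).factorial : ℝ) ≠ 0 := by positivity
  have f3 : (p.factorial : ℝ) ≠ 0 := by positivity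
  have f4 : (q.factorial : ℝ) ≠ 0 := by positivity
  have f5 : (r.factorial : ℝ) ≠ 0 := by positivity
  generalize ((p + r + 3 + q).factorial) = N at *
  generalize ((p + r + 1).factorial) = M at *
  generalize Elem.D _ _ = D₁ at *
  push_cast
  have k1 : (p:ℝ) + r + 1 + 1 ≠ 0 := by positivity
  have k2 : (p:ℝ) + 1 ≠ 0 := by positivity
  have k3 : (q:ℝ) + 1 ≠ 0 := by positivity
  have k4 : (r:ℝ) + 1 ≠ 0 := by positivity
  field_simp
  ring
end

section
/- For integers 1 ≤ j ≤ n, the function x ↦ x^{j−1}(1−x)^{n−j}·log x is Lebesgue integrable on (0,1) and ∫₀¹ x^{j−1}(1−x)^{n−j}·log x dx = ((j−1)!·(n−j)!/n!)·(H_{j−1} − H_n). -/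
open MeasureTheory Real Set

lemma bl_int (a b : ℕ) : IntervalIntegrable
    (fun x : ℝ => x ^ a * (1 - x) ^ b * Real.log x) volume 0 1 := by
  apply IntervalIntegrable.continuousOn_mul
  · exact intervalIntegral.intervalIntegrable_log'
  · fun_prop

lemma bl_base (a : ℕ) :
    ∫ x in (0 : ℝ)..1, x ^ a * (1 - x) ^ 0 * Real.log x = -1 / ((a : ℝ) + 1) ^ 2 := by
  have ha : (a : ℝ) + 1 ≠ 0 := by positivity
  have hc : Continuous (fun x : ℝ => x ^ a * (x * Real.log x) / ((a : ℝ) + 1)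
      - x ^ (a + 1) / ((a : ℝ) + 1) ^ 2) := by
    have := Real.continuous_mul_log
    fun_prop
  rw [intervalIntegral.integral_eq_sub_of_hasDerivAt_of_le zero_le_one hc.continuousOn _
    (bl_int a 0)]
  · simp [neg_div]
  · intro x hx
    have hx0 : x ≠ 0 := hx.1.ne'
    have h1 := (((hasDerivAt_pow (a + 1) x).mul (Real.hasDerivAt_log hx0)).div_const
      ((a : ℝ) + 1)).sub ((hasDerivAt_pow (a + 1) x).div_const (((a : ℝ) + 1) ^ 2))
    convert h1 using 1
    · funext y
      simp only [Pi.sub_apply, Pi.mul_apply]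
      ring
    · simp only [Nat.add_sub_cancel]
      push_cast
      field_simp
      ring

lemma bl_main (b : ℕ) : ∀ a : ℕ,
    ∫ x in (0 : ℝ)..1, x ^ a * (1 - x) ^ b * Real.log x =
      (a.factorial : ℝ) * (b.factorial : ℝ) / ((a + b + 1).factorial : ℝ) *
        ((∑ r ∈ Finset.Icc 1 a, (1 : ℝ) / r) -
          ∑ r ∈ Finset.Icc 1 (a + b + 1), (1 : ℝ) / r) := by
  induction b with
  | zero =>
    intro a
    rw [bl_base, Nat.add_zero, Finset.sum_Icc_succ_top (by omega), Nat.factorial_succ]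
    have := Nat.factorial_ne_zero a
    push_cast
    field_simp
    simp
  | succ b ih =>
    intro a
    have h : ∀ x : ℝ, x ^ a * (1 - x) ^ (b + 1) * Real.log x =
        x ^ a * (1 - x) ^ b * Real.log x - x ^ (a + 1) * (1 - x) ^ b * Real.log x := by
      intro x; ring
    simp_rw [h]
    rw [intervalIntegral.integral_sub (bl_int a b) (bl_int (a + 1) b), ih, ih,
      show a + 1 + b + 1 = a + b + 1 + 1 by omega, show a + (b + 1) + 1 = a + b + 1 + 1 by omega,
      Finset.sum_Icc_succ_top (b := a + b + 1) (by omega),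
      Finset.sum_Icc_succ_top (b := a) (by omega),
      Nat.factorial_succ (a + b + 1), Nat.factorial_succ a, Nat.factorial_succ b]
    have h1 : ((a + b + 1).factorial : ℝ) ≠ 0 := by positivity
    have h2 : (a : ℝ) + 1 ≠ 0 := by positivity
    have h3 : (a : ℝ) + b + 1 + 1 ≠ 0 := by positivity
    generalize (∑ r ∈ Finset.Icc 1 a, (1 : ℝ) / r) = A
    generalize (∑ r ∈ Finset.Icc 1 (a + b + 1), (1 : ℝ) / r) = B
    push_cast
    field_simp
    ring

/-- `∫₀¹ x^{j−1}(1−x)^{n−j} log x dx = ((j−1)!(n−j)!/n!)(H_{j−1} − H_n)`, where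
`H_m = ∑_{r=1}^m 1/r` is the `m`-th harmonic number. -/
theorem beta_log_integral (n j : ℕ) (hj : 1 ≤ j) (hjn : j ≤ n) :
    IntegrableOn (fun x => x ^ (j - 1) * (1 - x) ^ (n - j) * Real.log x)
      (Set.Ioo (0 : ℝ) 1) volume ∧
    ∫ x in Set.Ioo (0 : ℝ) 1, x ^ (j - 1) * (1 - x) ^ (n - j) * Real.log x =
      ((j - 1).factorial : ℝ) * ((n - j).factorial : ℝ) / (n.factorial : ℝ) *
        ((∑ r ∈ Finset.Icc 1 (j - 1), (1 : ℝ) / r) -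
          ∑ r ∈ Finset.Icc 1 n, (1 : ℝ) / r) := by
  obtain ⟨a, rfl⟩ : ∃ a, j = a + 1 := ⟨j - 1, by omega⟩
  obtain ⟨b, rfl⟩ : ∃ b, n = a + b + 1 := ⟨n - (a + 1), by omega⟩
  have e : a + b + 1 - (a + 1) = b := by omega
  rw [e, Nat.add_sub_cancel]
  refine ⟨(intervalIntegrable_iff_integrableOn_Ioo_of_le zero_le_one).1 (bl_int a b), ?_⟩
  rw [← integral_Ioc_eq_integral_Ioo, ← intervalIntegral.integral_of_le zero_le_one]
  exact bl_main b a
end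

section
/- Let n ≥ 2 and let i, j be integers with 1 ≤ i < j ≤ n. Let f : (0,1) → ℝ be measurable such that φ ↦ φ^{i−1}(1−φ)^{j−i−1}·f(φ) is Lebesgue integrable on (0,1). Then the function (x,y) ↦ x^{i−1}·(1−y)^{n−j}·(y−x)^{j−i−1}·f(x/y) is Lebesgue integrable on the region {(x,y) : 0 < x < y < 1}, and ∫∫_{0<x<y<1} x^{i−1}(1−y)^{n−j}(y−x)^{j−i−1}·f(x/y) dx dy = (∫₀¹ y^{j−1}(1−y)^{n−j} dy) · (∫₀¹ φ^{i−1}(1−φ)^{j−i−1}·f(φ) dφ). -/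
open MeasureTheory Real Set

/-- Factorization over the ratio `φ = x/y`: for `1 ≤ i < j ≤ n` and measurable `f`
with `φ ↦ φ^{i−1}(1−φ)^{j−i−1} f(φ)` integrable on `(0,1)`, the function
`(x,y) ↦ x^{i−1}(1−y)^{n−j}(y−x)^{j−i−1} f(x/y)` is integrable on `{0 < x < y < 1}` and
its integral factorizes as `(∫₀¹ y^{j−1}(1−y)^{n−j} dy)(∫₀¹ φ^{i−1}(1−φ)^{j−i−1} f(φ) dφ)`. -/
theorem ratio_factorization (n i j : ℕ) (hn : 2 ≤ n) (hi : 1 ≤ i) (hij : i < j)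
    (hj : j ≤ n) (f : ℝ → ℝ) (hf : Measurable f)
    (hint : IntegrableOn (fun φ => φ ^ (i - 1) * (1 - φ) ^ (j - i - 1) * f φ)
      (Set.Ioo (0 : ℝ) 1) volume) :
    IntegrableOn
      (fun p : ℝ × ℝ =>
        p.1 ^ (i - 1) * (1 - p.2) ^ (n - j) * (p.2 - p.1) ^ (j - i - 1) * f (p.1 / p.2))
      {p : ℝ × ℝ | 0 < p.1 ∧ p.1 < p.2 ∧ p.2 < 1} volume ∧
    ∫ p in {p : ℝ × ℝ | 0 < p.1 ∧ p.1 < p.2 ∧ p.2 < 1},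
        p.1 ^ (i - 1) * (1 - p.2) ^ (n - j) * (p.2 - p.1) ^ (j - i - 1) * f (p.1 / p.2) =
      (∫ y in Set.Ioo (0 : ℝ) 1, y ^ (j - 1) * (1 - y) ^ (n - j)) *
        ∫ φ in Set.Ioo (0 : ℝ) 1, φ ^ (i - 1) * (1 - φ) ^ (j - i - 1) * f φ := by
  set g : ℝ × ℝ → ℝ × ℝ := fun p => (p.1 * p.2, p.2) with hg
  set g' : ℝ × ℝ → (ℝ × ℝ →L[ℝ] ℝ × ℝ) := fun p =>
    (Matrix.toLin (Module.Basis.finTwoProd ℝ) (Module.Basis.finTwoProd ℝ)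
      !![p.2, p.1; 0, 1]).toContinuousLinearMap with hg'
  set s : Set (ℝ × ℝ) := Ioo (0:ℝ) 1 ×ˢ Ioo (0:ℝ) 1 with hs
  have hsm : MeasurableSet s := measurableSet_Ioo.prod measurableSet_Ioo
  have hder : ∀ p ∈ s, HasFDerivWithinAt g (g' p) s p := by
    intro p _
    apply HasFDerivAt.hasFDerivWithinAt
    simp only [hg']
    rw [Matrix.toLin_finTwoProd_toContinuousLinearMap]
    have h1 : HasFDerivAt (fun p : ℝ × ℝ => p.1 * p.2) _ p :=
      (hasFDerivAt_fst (𝕜 := ℝ) (p := p)).mul (hasFDerivAt_snd (𝕜 := ℝ) (p := p))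
    have h2 := h1.prodMk (hasFDerivAt_snd (𝕜 := ℝ) (p := p))
    convert! h2 using 2
    · rw [add_comm]
    · simp
  have hdet : ∀ p, (g' p).det = p.2 := by
    intro p
    simp [hg', ContinuousLinearMap.det, LinearMap.det_toLin, Matrix.det_fin_two_of]
  have hinj : InjOn g s := by
    rintro ⟨a, b⟩ ⟨_, hb⟩ ⟨c, d⟩ ⟨_, hd⟩ h
    simp only [hg, Prod.mk.injEq] at h
    obtain ⟨h1, rfl⟩ := h
    have : b ≠ 0 := ne_of_gt hb.1
    simp [mul_right_cancel₀ this h1]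
  have himg : g '' s = {p : ℝ × ℝ | 0 < p.1 ∧ p.1 < p.2 ∧ p.2 < 1} := by
    ext ⟨x, y⟩
    constructor
    · rintro ⟨⟨a, b⟩, ⟨ha, hb⟩, h⟩
      simp only [hg, Prod.mk.injEq] at h
      obtain ⟨rfl, rfl⟩ := h
      exact ⟨mul_pos ha.1 hb.1, mul_lt_of_lt_one_left hb.1 ha.2, hb.2⟩
    · rintro ⟨h1, h2, h3⟩
      simp only at h1 h2 h3
      have hy : 0 < y := h1.trans h2
      refine ⟨(x / y, y), ⟨⟨div_pos h1 hy, (div_lt_one hy).2 h2⟩, hy, h3⟩, ?_⟩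
      simp [hg, hy.ne']
  have heq : ∀ p ∈ s, |(g' p).det| • ((g p).1 ^ (i - 1) * (1 - (g p).2) ^ (n - j) *
        ((g p).2 - (g p).1) ^ (j - i - 1) * f ((g p).1 / (g p).2)) =
      (p.1 ^ (i - 1) * (1 - p.1) ^ (j - i - 1) * f p.1) *
        (p.2 ^ (j - 1) * (1 - p.2) ^ (n - j)) := by
    rintro ⟨a, b⟩ ⟨_, hb⟩
    have hb0 : 0 < b := hb.1
    have e1 : b - a * b = b * (1 - a) := by ring
    have e2 : b ^ (j - 1) = b * b ^ (i - 1) * b ^ (j - i - 1) := by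
      rw [← pow_succ', ← pow_add]; congr 1; omega
    simp only [hdet, hg, smul_eq_mul, abs_of_pos hb0, mul_div_cancel_right₀ _ hb0.ne', e1, e2,
      mul_pow]
    ring
  have hpoly : IntegrableOn (fun y : ℝ => y ^ (j - 1) * (1 - y) ^ (n - j)) (Ioo 0 1) volume :=
    (Continuous.integrableOn_Icc (by fun_prop)).mono_set Ioo_subset_Icc_self
  have hvol : (volume : Measure (ℝ × ℝ)).restrict s =
      (volume.restrict (Ioo (0:ℝ) 1)).prod (volume.restrict (Ioo (0:ℝ) 1)) := by
    rw [Measure.prod_restrict, Measure.volume_eq_prod]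
  rw [← himg]
  constructor
  · rw [integrableOn_image_iff_integrableOn_abs_det_fderiv_smul volume hsm hder hinj,
      integrableOn_congr_fun heq hsm, IntegrableOn, hvol]
    exact Integrable.mul_prod hint hpoly
  · rw [integral_image_eq_integral_abs_det_fderiv_smul volume hsm hder hinj,
      setIntegral_congr_fun hsm heq, hvol, integral_prod_mul
        (fun φ => φ ^ (i - 1) * (1 - φ) ^ (j - i - 1) * f φ)
        (fun y => y ^ (j - 1) * (1 - y) ^ (n - j)), mul_comm]
end

section
/- For every k ∈ ℕ, lim_{γ → ∞} γ · ∫₀¹ φ^k·log(1−φ^γ) dφ = −π²/6. Equivalently, writing γ = 1/ε, the integral g_k(1/ε) = −ψ′(1)·ε + O(ε²) as ε → 0⁺, where ψ′(1) = π²/6. -/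
open MeasureTheory Real Set Filter Asymptotics

lemma gk_term (k : ℕ) (γ : ℝ) (hγ : 0 < γ) (n : ℕ) :
    IntegrableOn (fun φ : ℝ => φ ^ ((k : ℝ) + γ * (n + 1)) / (n + 1)) (Set.Ioo (0 : ℝ) 1) ∧
    ∫ φ in Set.Ioo (0 : ℝ) 1, φ ^ ((k : ℝ) + γ * (n + 1)) / (n + 1)
      = 1 / ((n + 1) * (k + 1 + γ * (n + 1))) := by
  have hp : 0 < (k : ℝ) + γ * (n + 1) := by positivity
  constructor
  · apply Integrable.div_const
    have := intervalIntegral.intervalIntegrable_rpow' (a := 0) (b := 1)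
      (r := (k : ℝ) + γ * (n + 1)) (by linarith)
    rw [intervalIntegrable_iff_integrableOn_Ioo_of_le zero_le_one] at this
    exact this
  · rw [integral_div, ← integral_Ioc_eq_integral_Ioo,
      ← intervalIntegral.integral_of_le zero_le_one, integral_rpow (Or.inl (by linarith))]
    rw [Real.one_rpow, Real.zero_rpow (by positivity)]
    rw [sub_zero, div_div]
    congr 1
    ring

lemma gk_bound_term (k : ℕ) (γ : ℝ) (hγ : 0 < γ) (n : ℕ) :
    |1 / γ * (1 / ((n : ℝ) + 1) ^ 2) - 1 / (((n : ℝ) + 1) * (k + 1 + γ * (n + 1)))|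
      ≤ (k + 1) / γ ^ 2 * (1 / ((n : ℝ) + 1) ^ 2) := by
  have h : 1 / γ * (1 / ((n : ℝ) + 1) ^ 2) - 1 / (((n : ℝ) + 1) * (k + 1 + γ * (n + 1)))
      = (k + 1) / (γ * (k + 1 + γ * (n + 1))) * (1 / ((n : ℝ) + 1) ^ 2) := by
    have : (k : ℝ) + 1 + γ * (n + 1) ≠ 0 := by positivity
    field_simp
    ring
  rw [h, abs_of_nonneg (by positivity)]
  gcongr
  have h1 : 0 ≤ γ * n := by positivity
  have h2 : (0 : ℝ) ≤ k := by positivity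
  nlinarith

lemma gk_zeta : HasSum (fun n : ℕ => 1 / ((n : ℝ) + 1) ^ 2) (π ^ 2 / 6) := by
  have h := (hasSum_nat_add_iff' (f := fun n : ℕ => (1 : ℝ) / (n : ℝ) ^ 2) 1).mpr hasSum_zeta_two
  simpa using h

lemma gk_hasSum (k : ℕ) (γ : ℝ) (hγ : 0 < γ) :
    HasSum (fun n : ℕ => 1 / (((n : ℝ) + 1) * (k + 1 + γ * (n + 1))))
      (-∫ φ in Set.Ioo (0 : ℝ) 1, φ ^ k * Real.log (1 - φ ^ γ)) := by
  have hs : Summable (fun n : ℕ => 1 / (((n : ℝ) + 1) * (k + 1 + γ * (n + 1)))) := by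
    refine Summable.of_nonneg_of_le (fun n => by positivity) (fun n => ?_)
      (gk_zeta.summable.mul_left (1 / γ))
    rw [one_div_mul_one_div]
    apply one_div_le_one_div_of_le (by positivity)
    have h2 : (0 : ℝ) ≤ k := by positivity
    have h3 : (0 : ℝ) ≤ n := by positivity
    nlinarith [mul_nonneg h2 h3, hγ]
  have h := hasSum_integral_of_summable_integral_norm
    (μ := volume.restrict (Set.Ioo (0 : ℝ) 1))
    (F := fun (n : ℕ) (φ : ℝ) => φ ^ ((k : ℝ) + γ * (n + 1)) / (n + 1))
    (fun n => (gk_term k γ hγ n).1) (by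
      refine hs.congr fun n => ?_
      rw [← (gk_term k γ hγ n).2]
      refine setIntegral_congr_fun measurableSet_Ioo fun φ hφ => ?_
      have := hφ.1
      exact (Real.norm_of_nonneg (by positivity)).symm)
  simp only [(gk_term k γ hγ _).2] at h
  suffices he : (-∫ φ in Set.Ioo (0 : ℝ) 1, φ ^ k * Real.log (1 - φ ^ γ))
      = ∫ φ in Set.Ioo (0 : ℝ) 1, ∑' n : ℕ, φ ^ ((k : ℝ) + γ * (n + 1)) / (n + 1) by
    rw [he]
    exact h
  rw [← integral_neg]
  refine setIntegral_congr_fun measurableSet_Ioo fun φ hφ => ?_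
  have h0 := hφ.1
  have h1 : φ ^ γ < 1 := Real.rpow_lt_one h0.le hφ.2 hγ
  have h2 : 0 < φ ^ γ := by positivity
  have h3 := (Real.hasSum_pow_div_log_of_abs_lt_one (x := φ ^ γ)
    (by rw [abs_of_pos h2]; exact h1)).mul_left (φ ^ k)
  have h4 := h3.tsum_eq
  rw [← mul_neg, ← h4]
  refine tsum_congr fun n => ?_
  rw [Real.rpow_add h0, Real.rpow_mul h0.le, Real.rpow_natCast, mul_div_assoc]
  congr 2
  exact_mod_cast (Real.rpow_natCast (φ ^ γ) (n + 1)).symm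

lemma gk_bound (k : ℕ) (γ : ℝ) (hγ : 0 < γ) :
    |(∫ φ in Set.Ioo (0 : ℝ) 1, φ ^ k * Real.log (1 - φ ^ γ)) + 1 / γ * (π ^ 2 / 6)|
      ≤ (k + 1) / γ ^ 2 * (π ^ 2 / 6) := by
  have h := (gk_zeta.mul_left (1 / γ)).sub (gk_hasSum k γ hγ)
  have h2 := gk_zeta.mul_left (((k : ℝ) + 1) / γ ^ 2)
  have h3 := tsum_of_norm_bounded (f := fun n : ℕ => 1 / γ * (1 / ((n : ℝ) + 1) ^ 2)
    - 1 / (((n : ℝ) + 1) * (k + 1 + γ * (n + 1)))) h2 (fun n => gk_bound_term k γ hγ n)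
  rw [h.tsum_eq, Real.norm_eq_abs] at h3
  convert h3 using 2
  ring

/-- `lim_{γ → ∞} γ ∫₀¹ φ^k log(1−φ^γ) dφ = −π²/6`; equivalently, with `γ = 1/ε`,
`g_k(1/ε) = −(π²/6) ε + O(ε²)` as `ε → 0⁺`. -/
theorem gk_asymptotics (k : ℕ) :
    Tendsto (fun γ : ℝ => γ * ∫ φ in Set.Ioo (0 : ℝ) 1, φ ^ k * Real.log (1 - φ ^ γ))
      atTop (nhds (-(Real.pi ^ 2 / 6))) ∧
    (fun ε : ℝ =>
        (∫ φ in Set.Ioo (0 : ℝ) 1, φ ^ k * Real.log (1 - φ ^ (1 / ε)))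
          + Real.pi ^ 2 / 6 * ε) =O[nhdsWithin 0 (Set.Ioi 0)] fun ε : ℝ => ε ^ 2 := by
  constructor
  · rw [tendsto_iff_norm_sub_tendsto_zero]
    refine squeeze_zero' (g := fun γ : ℝ => ((k : ℝ) + 1) * (π ^ 2 / 6) / γ)
      (Eventually.of_forall fun _ => norm_nonneg _) ?_
      (tendsto_const_nhds.div_atTop tendsto_id)
    filter_upwards [eventually_gt_atTop 0] with γ hγ
    have h := mul_le_mul_of_nonneg_left (gk_bound k γ hγ) hγ.le
    nth_rw 1 [← abs_of_pos hγ] at h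
    rw [← abs_mul] at h
    rw [Real.norm_eq_abs]
    have e1 : (γ * ∫ φ in Set.Ioo (0 : ℝ) 1, φ ^ k * Real.log (1 - φ ^ γ)) - -(π ^ 2 / 6)
        = γ * ((∫ φ in Set.Ioo (0 : ℝ) 1, φ ^ k * Real.log (1 - φ ^ γ))
          + 1 / γ * (π ^ 2 / 6)) := by
      rw [mul_add, ← mul_assoc, mul_one_div_cancel hγ.ne']
      ring
    have e2 : ((k : ℝ) + 1) * (π ^ 2 / 6) / γ = γ * ((k + 1) / γ ^ 2 * (π ^ 2 / 6)) := by
      field_simp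
    rw [e1, e2]
    exact h
  · refine IsBigO.of_bound (((k : ℝ) + 1) * (π ^ 2 / 6)) ?_
    filter_upwards [self_mem_nhdsWithin] with ε hε
    have hε : 0 < ε := hε
    have h := gk_bound k (1 / ε) (by positivity)
    rw [Real.norm_eq_abs, Real.norm_of_nonneg (by positivity)]
    convert h using 1
    · congr 2
      field_simp
    · field_simp
end

section
/- Fix m ∈ ℕ. If real numbers b_0, …, b_m satisfy ∑_{k=0}^{m} b_k · ∫₀¹ φ^k·log(1−φ^γ) dφ = 0 for every γ > 0, then b_0 = b_1 = ⋯ = b_m = 0. That is, the functions g_k(γ) = ∫₀¹ φ^k·log(1−φ^γ) dφ, for k = 0, 1, …, m, are linearly independent as functions of γ on (0, ∞). -/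
open MeasureTheory Real Set

/-- The series attached to `g_k`. -/
noncomputable def gkS (j : ℕ) (x : ℝ) : ℝ := ∑' n : ℕ, 1 / (((n:ℝ)+1)^(j+1) * ((n:ℝ)+1+x))

lemma summable_zeta (j : ℕ) : Summable (fun n : ℕ => 1 / ((n:ℝ)+1)^(j+2)) := by
  have := (summable_nat_add_iff 1).2 (Real.summable_one_div_nat_pow.2 (show 1 < j+2 by omega))
  simpa using this

lemma term_le (j n : ℕ) {x : ℝ} (hx : 0 ≤ x) :
    1 / (((n:ℝ)+1)^(j+1) * ((n:ℝ)+1+x)) ≤ 1 / ((n:ℝ)+1)^(j+2) := by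
  rw [pow_succ _ (j+1)]
  have h1 : (n:ℝ)+1 ≤ (n:ℝ)+1+x := by linarith
  exact one_div_le_one_div_of_le (by positivity) (mul_le_mul_of_nonneg_left h1 (by positivity))

lemma summable_S (j : ℕ) {x : ℝ} (hx : 0 ≤ x) :
    Summable (fun n : ℕ => 1 / (((n:ℝ)+1)^(j+1) * ((n:ℝ)+1+x))) :=
  Summable.of_nonneg_of_le (fun n => by positivity) (fun n => term_le j n hx) (summable_zeta j)

lemma S_nonneg (j : ℕ) {x : ℝ} (hx : 0 ≤ x) : 0 ≤ gkS j x :=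
  tsum_nonneg (fun n => by positivity)

lemma S_le (j : ℕ) {x : ℝ} (hx : 0 ≤ x) : gkS j x ≤ ∑' n : ℕ, 1 / ((n:ℝ)+1)^(j+2) :=
  (summable_S j hx).tsum_le_tsum (fun n => term_le j n hx) (summable_zeta j)

lemma S_rec (j : ℕ) {x : ℝ} (hx : 0 ≤ x) :
    gkS j x = (∑' n : ℕ, 1 / ((n:ℝ)+1)^(j+2)) - x * gkS (j+1) x := by
  unfold gkS
  rw [← tsum_mul_left, ← (summable_zeta j).tsum_sub ((summable_S (j+1) hx).mul_left x)]
  congr 1; ext n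
  have h1 : (n:ℝ)+1 ≠ 0 := by positivity
  have h2 : (n:ℝ)+1+x ≠ 0 := by positivity
  field_simp
  ring

lemma zeta_pos (j : ℕ) : 0 < ∑' n : ℕ, 1 / ((n:ℝ)+1)^(j+2) :=
  (summable_zeta j).tsum_pos (fun n => by positivity) 0 (by norm_num)

lemma integral_eq (k : ℕ) {γ : ℝ} (hγ : 0 < γ) :
    ∫ φ in Set.Ioo (0 : ℝ) 1, φ ^ k * Real.log (1 - φ ^ γ) = -(1/γ) * gkS 0 ((k+1) * (1/γ)) := by
  set F : ℕ → ℝ → ℝ := fun n φ => (1 / ((n:ℝ)+1)) * φ ^ ((k:ℝ) + γ * ((n:ℝ)+1)) with hF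
  have hexp : ∀ n : ℕ, (-1:ℝ) < (k:ℝ) + γ * ((n:ℝ)+1) := fun n => by
    have : 0 ≤ (k:ℝ) + γ * ((n:ℝ)+1) := by positivity
    linarith
  have hint : ∀ n, Integrable (F n) (volume.restrict (Ioo 0 1)) := fun n => by
    apply Integrable.const_mul
    have := (intervalIntegral.intervalIntegrable_rpow' (a := 0) (b := 1) (hexp n))
    rw [intervalIntegrable_iff_integrableOn_Ioo_of_le zero_le_one] at this
    exact this
  have hval : ∀ n, ∫ φ in Ioo (0:ℝ) 1, F n φ
      = (1/γ) * (1 / (((n:ℝ)+1)^(0+1) * ((n:ℝ)+1+(k+1) * (1/γ)))) := fun n => by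
    simp only [hF]
    rw [integral_const_mul, ← integral_Ioc_eq_integral_Ioo,
      ← intervalIntegral.integral_of_le zero_le_one, integral_rpow (Or.inl (hexp n))]
    have h1 : (k:ℝ) + γ * ((n:ℝ)+1) + 1 ≠ 0 := by positivity
    have h2 : (n:ℝ)+1+(k+1) * (1/γ) ≠ 0 := by positivity
    rw [Real.one_rpow, Real.zero_rpow h1]
    field_simp
    ring
  have hnorm : ∀ n, ∫ φ in Ioo (0:ℝ) 1, ‖F n φ‖ = ∫ φ in Ioo (0:ℝ) 1, F n φ := fun n => by
    refine setIntegral_congr_fun measurableSet_Ioo fun φ hφ => ?_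
    have : 0 < φ := hφ.1
    exact Real.norm_of_nonneg (by simp only [hF]; positivity)
  have hsum := hasSum_integral_of_summable_integral_norm hint (by
    simp_rw [hnorm, hval]
    exact (summable_S 0 (by positivity)).mul_left _)
  have h3 : ∫ φ in Ioo (0:ℝ) 1, ∑' n, F n φ
      = - ∫ φ in Set.Ioo (0 : ℝ) 1, φ ^ k * Real.log (1 - φ ^ γ) := by
    rw [← integral_neg]
    refine setIntegral_congr_fun measurableSet_Ioo fun φ hφ => ?_
    have h0 : 0 < φ := hφ.1
    have hlt : φ ^ γ < 1 := Real.rpow_lt_one h0.le hφ.2 hγ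
    have hp : 0 < φ ^ γ := Real.rpow_pos_of_pos h0 _
    have := (Real.hasSum_pow_div_log_of_abs_lt_one (x := φ ^ γ)
      (by rwa [abs_of_pos hp])).mul_left (φ ^ k)
    have h4 := this.tsum_eq
    simp only [hF]
    rw [← mul_neg, ← h4]
    congr 1; ext n
    rw [Real.rpow_add h0, Real.rpow_natCast, Real.rpow_mul h0.le]
    have : (φ ^ γ) ^ ((n:ℝ)+1) = (φ ^ γ) ^ (n+1) := by
      rw [← Real.rpow_natCast]; push_cast; rfl
    rw [this]; ring
  have h5 := hsum.tsum_eq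
  rw [h3] at h5
  simp_rw [hval] at h5
  rw [tsum_mul_left] at h5
  unfold gkS
  linarith

/-- Linear independence of the functions `g_k(γ) = ∫₀¹ φ^k log(1−φ^γ) dφ`,
`k = 0, …, m`, on `(0, ∞)`: if `∑_{k=0}^m b_k g_k(γ) = 0` for all `γ > 0` then all
`b_k` vanish. -/
theorem gk_linearIndependent (m : ℕ) (b : ℕ → ℝ)
    (h : ∀ γ : ℝ, 0 < γ →
      ∑ k ∈ Finset.range (m + 1),
        b k * ∫ φ in Set.Ioo (0 : ℝ) 1, φ ^ k * Real.log (1 - φ ^ γ) = 0) :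
    ∀ k ≤ m, b k = 0 := by
  -- one step of the recursion
  have step : ∀ j : ℕ, (∀ t : ℝ, 0 < t →
      ∑ k ∈ Finset.range (m+1), b k * ((k:ℝ)+1)^j * gkS j ((k+1)*t) = 0) →
      (∑ k ∈ Finset.range (m+1), b k * ((k:ℝ)+1)^j = 0) ∧ (∀ t : ℝ, 0 < t →
      ∑ k ∈ Finset.range (m+1), b k * ((k:ℝ)+1)^(j+1) * gkS (j+1) ((k+1)*t) = 0) := by
    intro j hj
    set Z := ∑' n : ℕ, 1 / ((n:ℝ)+1)^(j+2) with hZ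
    set M := ∑ k ∈ Finset.range (m+1), b k * ((k:ℝ)+1)^j with hM
    have hid : ∀ t : ℝ, 0 < t → M * Z =
        t * ∑ k ∈ Finset.range (m+1), b k * ((k:ℝ)+1)^(j+1) * gkS (j+1) ((k+1)*t) := by
      intro t ht
      have h1 := hj t ht
      rw [← sub_eq_zero, ← h1, hM, Finset.sum_mul, Finset.mul_sum, ← Finset.sum_sub_distrib]
      refine Finset.sum_congr rfl fun k _ => ?_
      rw [S_rec j (x := (k+1)*t) (by positivity)]
      ring
    have hM0 : M = 0 := by
      set Z' := ∑' n : ℕ, 1 / ((n:ℝ)+1)^(j+1+2)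
      set C := ∑ k ∈ Finset.range (m+1), |b k * ((k:ℝ)+1)^(j+1)| * Z' with hC
      have hb : ∀ t : ℝ, 0 < t → |M * Z| ≤ t * C := by
        intro t ht
        rw [hid t ht, abs_mul, abs_of_pos ht]
        gcongr
        refine (Finset.abs_sum_le_sum_abs _ _).trans (Finset.sum_le_sum fun k _ => ?_)
        rw [abs_mul, abs_of_nonneg (S_nonneg (j+1) (x := (k+1)*t) (by positivity))]
        gcongr
        exact S_le (j+1) (by positivity)
      by_contra hne
      have hpos : 0 < |M * Z| := abs_pos.2 (mul_ne_zero hne (zeta_pos j).ne')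
      have hC0 : 0 < C := by
        have := hb 1 one_pos
        linarith
      have := hb (|M * Z| / (2 * C)) (by positivity)
      have h2 : |M * Z| / (2 * C) * C = |M * Z| / 2 := by field_simp
      linarith
    refine ⟨hM0, fun t ht => ?_⟩
    have := hid t ht
    rw [hM0, zero_mul] at this
    exact (mul_eq_zero.1 this.symm).resolve_left ht.ne'
  have all : ∀ j : ℕ, ∀ t : ℝ, 0 < t →
      ∑ k ∈ Finset.range (m+1), b k * ((k:ℝ)+1)^j * gkS j ((k+1)*t) = 0 := by
    intro j
    induction j with
    | zero =>
      intro t ht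
      have h1 := h (1/t) (by positivity)
      have h2 : ∀ k : ℕ, b k * ∫ φ in Set.Ioo (0 : ℝ) 1, φ ^ k * Real.log (1 - φ ^ (1/t))
          = (-t) * (b k * ((k:ℝ)+1)^0 * gkS 0 ((k+1)*t)) := by
        intro k
        rw [integral_eq k (by positivity), one_div_one_div]
        ring
      simp_rw [h2] at h1
      rw [← Finset.mul_sum] at h1
      exact (mul_eq_zero.1 h1).resolve_left (by linarith)
    | succ j ih => exact (step j ih).2
  have mom : ∀ j : ℕ, ∑ k ∈ Finset.range (m+1), b k * ((k:ℝ)+1)^j = 0 :=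
    fun j => (step j (all j)).1
  have hv := Matrix.eq_zero_of_forall_pow_sum_mul_pow_eq_zero (R := ℝ) (n := m+1)
    (f := fun i : Fin (m+1) => ((i:ℕ):ℝ)+1) (v := fun i => b i)
    (fun i j hij => by
      simp only [add_left_inj, Nat.cast_inj] at hij
      exact Fin.ext hij)
    (fun i => by
      have := mom i
      rw [Finset.sum_range] at this
      exact this)
  intro k hk
  exact congrFun hv ⟨k, by omega⟩
end

section
/- Let N ≥ 3 and let a be a strictly upper-triangular real N×N matrix (a_{ij} = 0 unless 1 ≤ i < j ≤ N). Then a lies in the real linear span of the elemental weight matrices {E^{(I,J)} : 1 ≤ I, I+2 ≤ J ≤ N} if and only if ∑_{1 ≤ i < j ≤ N} a_{ij}·p_{ij}(X) = 0 in ℝ[X]. -/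
open Polynomial

/-- The Beta-density polynomial
`p_{ij}(X) = ((j−1)!/((i−1)!(j−i−1)!)) X^{i−1}(1−X)^{j−i−1}` in `ℝ[X]`. -/
noncomputable def betaPoly (i j : ℕ) : Polynomial ℝ :=
  Polynomial.C (((j - 1).factorial : ℝ) / (((i - 1).factorial : ℝ) * ((j - i - 1).factorial : ℝ)))
    * Polynomial.X ^ (i - 1) * (1 - Polynomial.X) ^ (j - i - 1)

/-- The elemental weight matrix `E^{(I,J)}` (as a function `ℕ → ℕ → ℝ` with 1-based
indices): its only nonzero entries are `E_{I,J−1} = J−1`, `E_{I,J} = −(J−1−I)` and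
`E_{I+1,J} = −I`. -/
noncomputable def elemMatrix (I J : ℕ) : ℕ → ℕ → ℝ := fun i j =>
  if i = I ∧ j = J - 1 then (J : ℝ) - 1
  else if i = I ∧ j = J then -((J : ℝ) - 1 - (I : ℝ))
  else if i = I + 1 ∧ j = J then -(I : ℝ)
  else 0


/-- Matrix unit. -/
noncomputable def eUnit (I J : ℕ) : ℕ → ℕ → ℝ := fun i j => if i = I ∧ j = J then 1 else 0

/-- The map `a ↦ ∑ a_{ij} p_{ij}`. -/
noncomputable def LL (N : ℕ) : (ℕ → ℕ → ℝ) →ₗ[ℝ] Polynomial ℝ where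
  toFun a := ∑ i ∈ Finset.Icc 1 N, ∑ j ∈ Finset.Icc (i + 1) N, Polynomial.C (a i j) * betaPoly i j
  map_add' a b := by
    simp only [Pi.add_apply, map_add, add_mul, Finset.sum_add_distrib]
  map_smul' c a := by
    simp only [Pi.smul_apply, smul_eq_mul, map_mul, RingHom.id_apply, Polynomial.smul_eq_C_mul,
      Finset.mul_sum, mul_assoc]

/-- Matrices supported in column `N`. -/
def colN (N : ℕ) : Submodule ℝ (ℕ → ℕ → ℝ) where
  carrier := {b | ∀ i j, ¬ (1 ≤ i ∧ i < N ∧ j = N) → b i j = 0}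
  zero_mem' := by intro i j _; rfl
  add_mem' := by
    intro a b ha hb i j h
    simp [ha i j h, hb i j h]
  smul_mem' := by
    intro c a ha i j h
    simp [ha i j h]

theorem LL_eUnit (N i j : ℕ) (hi : 1 ≤ i) (hij : i < j) (hj : j ≤ N) :
    LL N (eUnit i j) = betaPoly i j := by
  show ∑ x ∈ Finset.Icc 1 N, ∑ y ∈ Finset.Icc (x + 1) N,
    Polynomial.C (eUnit i j x y) * betaPoly x y = _
  rw [Finset.sum_eq_single i, Finset.sum_eq_single j]
  · simp [eUnit]
  · intro b _ hb
    simp [eUnit, hb]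
  · intro h
    exact absurd (Finset.mem_Icc.2 ⟨by omega, hj⟩) h
  · intro b _ hb
    apply Finset.sum_eq_zero
    intro c _
    simp [eUnit, hb]
  · intro h
    exact absurd (Finset.mem_Icc.2 ⟨hi, by omega⟩) h

theorem elem_eq (I J : ℕ) (hJ : I + 2 ≤ J) :
    elemMatrix I J = ((J : ℝ) - 1) • eUnit I (J - 1) - ((J : ℝ) - 1 - I) • eUnit I J
      - (I : ℝ) • eUnit (I + 1) J := by
  funext i j
  simp only [elemMatrix, eUnit, Pi.sub_apply, Pi.smul_apply, smul_eq_mul]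
  by_cases h1 : i = I ∧ j = J - 1
  · rw [if_pos h1, if_pos h1, if_neg (by omega), if_neg (by omega)]; ring
  · by_cases h2 : i = I ∧ j = J
    · rw [if_neg h1, if_neg h1, if_pos h2, if_pos h2, if_neg (by omega)]; ring
    · by_cases h3 : i = I + 1 ∧ j = J
      · rw [if_neg h1, if_neg h1, if_neg h2, if_neg h2, if_pos h3, if_pos h3]; ring
      · rw [if_neg h1, if_neg h1, if_neg h2, if_neg h2, if_neg h3, if_neg h3]; ring

theorem LL_elem (N I J : ℕ) (hI : 1 ≤ I) (hJ : I + 2 ≤ J) (hN : J ≤ N) :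
    LL N (elemMatrix I J) = 0 := by
  rw [elem_eq I J hJ]
  simp only [map_sub, map_smul]
  rw [LL_eUnit N I (J - 1) hI (by omega) (by omega), LL_eUnit N I J hI (by omega) hN,
    LL_eUnit N (I + 1) J (by omega) (by omega) hN]
  obtain ⟨p, rfl⟩ : ∃ p, I = p + 1 := ⟨I - 1, by omega⟩
  obtain ⟨q, rfl⟩ : ∃ q, J = p + 1 + 2 + q := ⟨J - (p + 1 + 2), by omega⟩
  have e1 : p + 1 + 2 + q - 1 = p + q + 2 := by omega
  have e2 : p + q + 2 - 1 = p + q + 1 := by omega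
  have e3 : p + q + 2 - (p + 1) - 1 = q := by omega
  have e4 : p + 1 + 2 + q - (p + 1) - 1 = q + 1 := by omega
  have e5 : p + 1 + 2 + q - (p + 1 + 1) - 1 = q := by omega
  simp only [betaPoly, e1, e2, e3, e4, e5, Nat.add_sub_cancel, Polynomial.smul_eq_C_mul]
  have f1 : ((p.factorial : ℝ)) ≠ 0 := by positivity
  have f2 : ((q.factorial : ℝ)) ≠ 0 := by positivity
  set c : ℝ := ((p + q + 2).factorial : ℝ) / (p.factorial * q.factorial) with hc
  have c1 : (((p + 1 + 2 + q : ℕ) : ℝ) - 1) *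
      (((p + q + 1).factorial : ℝ) / (p.factorial * q.factorial)) = c := by
    rw [hc, Nat.factorial_succ (p + q + 1)]; push_cast; ring
  have c2 : (((p + 1 + 2 + q : ℕ) : ℝ) - 1 - ((p + 1 : ℕ) : ℝ)) *
      (((p + q + 2).factorial : ℝ) / (p.factorial * (q + 1).factorial)) = c := by
    rw [hc, Nat.factorial_succ q]; push_cast
    have : (q : ℝ) + 1 ≠ 0 := by positivity
    field_simp; ring
  have c3 : (((p + 1 : ℕ) : ℝ)) *
      (((p + q + 2).factorial : ℝ) / ((p + 1).factorial * q.factorial)) = c := by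
    rw [hc, Nat.factorial_succ p]; push_cast
    have : (p : ℝ) + 1 ≠ 0 := by positivity
    field_simp
  simp only [← mul_assoc, ← map_mul]
  rw [c1, c2, c3]
  ring

theorem bern_indep (n : ℕ) : ∀ c : ℕ → ℝ,
    ∑ k ∈ Finset.range (n + 1), C (c k) * X ^ k * (1 - X : ℝ[X]) ^ (n - k) = 0 →
    ∀ k ≤ n, c k = 0 := by
  induction n with
  | zero =>
    intro c h k hk
    obtain rfl : k = 0 := by omega
    simpa using h
  | succ n ih =>
    intro c h
    rw [Finset.sum_range_succ'] at h
    have h0 : c 0 = 0 := by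
      have := congrArg (Polynomial.eval 0) h
      simpa [Polynomial.eval_finsetSum] using this
    have h1 : (X : ℝ[X]) *
        ∑ k ∈ Finset.range (n + 1), C (c (k + 1)) * X ^ k * (1 - X : ℝ[X]) ^ (n - k) = 0 := by
      rw [← h, h0, Finset.mul_sum]
      simp only [map_zero, zero_mul, add_zero]
      refine Finset.sum_congr rfl fun k _ => ?_
      rw [Nat.add_sub_add_right]; ring
    have h2 := ih (fun k => c (k + 1)) ((mul_eq_zero.1 h1).resolve_left X_ne_zero)
    intro k hk
    cases k with
    | zero => exact h0
    | succ k => exact h2 k (by omega)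

theorem colN_inj (N : ℕ) (hN : 3 ≤ N) (t : ℕ → ℕ → ℝ) (ht : t ∈ colN N) (h : LL N t = 0) :
    t = 0 := by
  have ht' : ∀ i j, ¬ (1 ≤ i ∧ i < N ∧ j = N) → t i j = 0 := ht
  have h' : ∑ x ∈ Finset.Icc 1 N, ∑ y ∈ Finset.Icc (x + 1) N,
    Polynomial.C (t x y) * betaPoly x y = 0 := h
  obtain ⟨n, rfl⟩ : ∃ n, N = n + 2 := ⟨N - 2, by omega⟩
  have h2 : ∑ x ∈ Finset.Icc 1 (n + 2), C (t x (n + 2)) * betaPoly x (n + 2) = 0 := by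
    rw [← h']
    refine Finset.sum_congr rfl fun x _ => ?_
    symm
    apply Finset.sum_eq_single (n + 2)
    · intro b _ hb
      rw [ht' x b (by omega)]; simp
    · intro hh
      rw [Finset.mem_Icc] at hh
      rw [ht' x (n + 2) (by omega)]; simp
  have h3 : ∑ k ∈ Finset.range (n + 2), C (t (k + 1) (n + 2)) * betaPoly (k + 1) (n + 2) = 0 := by
    rw [← h2, Finset.range_eq_Ico,
      Finset.sum_Ico_add' (fun x => C (t x (n + 2)) * betaPoly x (n + 2)) 0 (n + 2) 1]
    rfl
  rw [Finset.sum_range_succ, ht' (n + 1 + 1) (n + 2) (by omega), map_zero, zero_mul,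
    add_zero] at h3
  have h4 := bern_indep n (fun k => t (k + 1) (n + 2) *
      (((n + 1).factorial : ℝ) / (k.factorial * (n - k).factorial))) (by
    rw [← h3]
    refine Finset.sum_congr rfl fun k _ => ?_
    have e : n + 2 - (k + 1) - 1 = n - k := by omega
    simp only [betaPoly, e, Nat.add_sub_cancel, map_mul, mul_assoc]
    rfl)
  funext i j
  by_cases hij : 1 ≤ i ∧ i < n + 2 ∧ j = n + 2
  · obtain ⟨k, rfl⟩ : ∃ k, i = k + 1 := ⟨i - 1, by omega⟩
    obtain ⟨_, hk, rfl⟩ := hij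
    have := h4 k (by omega)
    refine (mul_eq_zero.1 this).resolve_right ?_
    positivity
  · exact ht' i j hij

theorem eUnit_mem (N : ℕ) (S : Submodule ℝ (ℕ → ℕ → ℝ))
    (hS : ∀ I J, 1 ≤ I → I + 2 ≤ J → J ≤ N → elemMatrix I J ∈ S) (d : ℕ) :
    ∀ i j, 1 ≤ i → i < j → j + d = N → eUnit i j ∈ S ⊔ colN N := by
  induction d with
  | zero =>
    intro i j hi hij hj
    apply Submodule.mem_sup_right
    intro x y hxy
    simp only [eUnit]
    rw [if_neg (by omega)]
  | succ d ih =>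
    intro i j hi hij hj
    have h1 := ih i (j + 1) hi (by omega) (by omega)
    have h2 := ih (i + 1) (j + 1) (by omega) (by omega) (by omega)
    have h3 : elemMatrix i (j + 1) ∈ S ⊔ colN N :=
      Submodule.mem_sup_left (hS i (j + 1) hi (by omega) (by omega))
    have hj0 : (j : ℝ) ≠ 0 := by
      have : j ≠ 0 := by omega
      exact_mod_cast this
    have key : eUnit i j = (j : ℝ)⁻¹ • (elemMatrix i (j + 1) + ((j : ℝ) - i) • eUnit i (j + 1)
        + (i : ℝ) • eUnit (i + 1) (j + 1)) := by
      rw [elem_eq i (j + 1) (by omega)]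
      funext x y
      simp only [Pi.sub_apply, Pi.add_apply, Pi.smul_apply, smul_eq_mul, Nat.add_sub_cancel]
      push_cast
      field_simp
      ring
    rw [key]
    exact Submodule.smul_mem _ _ (Submodule.add_mem _ (Submodule.add_mem _ h3
      (Submodule.smul_mem _ _ h1)) (Submodule.smul_mem _ _ h2))

/-- A strictly upper-triangular weight matrix `a` lies in the span of the elemental
weight matrices iff `∑_{1 ≤ i < j ≤ N} a_{ij} p_{ij}(X) = 0` in `ℝ[X]`. -/
theorem mem_span_elementals_iff (N : ℕ) (hN : 3 ≤ N) (a : ℕ → ℕ → ℝ)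
    (ha : ∀ i j, ¬(1 ≤ i ∧ i < j ∧ j ≤ N) → a i j = 0) :
    a ∈ Submodule.span ℝ
        {m : ℕ → ℕ → ℝ | ∃ I J, 1 ≤ I ∧ I + 2 ≤ J ∧ J ≤ N ∧ m = elemMatrix I J} ↔
      ∑ i ∈ Finset.Icc 1 N, ∑ j ∈ Finset.Icc (i + 1) N,
        Polynomial.C (a i j) * betaPoly i j = 0 := by
  set S := Submodule.span ℝ
        {m : ℕ → ℕ → ℝ | ∃ I J, 1 ≤ I ∧ I + 2 ≤ J ∧ J ≤ N ∧ m = elemMatrix I J} with hS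
  have hker : S ≤ LinearMap.ker (LL N) := by
    rw [hS, Submodule.span_le]
    rintro m ⟨I, J, hI, hJ, hJN, rfl⟩
    exact LL_elem N I J hI hJ hJN
  constructor
  · intro h
    exact hker h
  · intro h
    have hL : LL N a = 0 := h
    have hmem : a ∈ S ⊔ colN N := by
      have hdec : a = ∑ i ∈ Finset.Icc 1 N, ∑ j ∈ Finset.Icc 1 N, a i j • eUnit i j := by
        funext x y
        simp only [Finset.sum_apply, Pi.smul_apply, smul_eq_mul, eUnit]
        by_cases hx : x ∈ Finset.Icc 1 N
        · by_cases hy : y ∈ Finset.Icc 1 N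
          · rw [Finset.sum_eq_single_of_mem x hx, Finset.sum_eq_single_of_mem y hy]
            · simp
            · intro b _ hb
              rw [if_neg (by omega), mul_zero]
            · intro b _ hb
              refine Finset.sum_eq_zero fun c _ => ?_
              rw [if_neg (by omega), mul_zero]
          · rw [Finset.mem_Icc] at hy
            rw [ha x y (by omega)]
            symm
            refine Finset.sum_eq_zero fun b _ => Finset.sum_eq_zero fun c hc => ?_
            rw [Finset.mem_Icc] at hc
            rw [if_neg (by omega), mul_zero]
        · rw [Finset.mem_Icc] at hx
          rw [ha x y (by omega)]
          symm
          refine Finset.sum_eq_zero fun b hb => Finset.sum_eq_zero fun c _ => ?_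
          rw [Finset.mem_Icc] at hb
          rw [if_neg (by omega), mul_zero]
      rw [hdec]
      refine Submodule.sum_mem _ fun i _ => Submodule.sum_mem _ fun j _ => ?_
      by_cases hij : 1 ≤ i ∧ i < j ∧ j ≤ N
      · exact Submodule.smul_mem _ _ (eUnit_mem N S
          (fun I J h1 h2 h3 => Submodule.subset_span ⟨I, J, h1, h2, h3, rfl⟩) (N - j) i j
          hij.1 hij.2.1 (by omega))
      · rw [ha i j hij, zero_smul]
        exact Submodule.zero_mem _
    obtain ⟨s, hs, t, ht, rfl⟩ := Submodule.mem_sup.1 hmem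
    have hs0 : LL N s = 0 := hker hs
    rw [map_add, hs0, zero_add] at hL
    rw [colN_inj N hN t ht hL, add_zero]
    exact hs
end

section
/- Let N ≥ 3. The elemental weight matrices {E^{(I,J)} : 1 ≤ I, I+2 ≤ J ≤ N}, which number (N−1)(N−2)/2, are linearly independent over ℝ; consequently their span in the space of strictly upper-triangular real N×N matrices has dimension (N−1)(N−2)/2. -/
theorem elem_card (N : ℕ) (hN : 3 ≤ N) :
    Nat.card {p : ℕ × ℕ // 1 ≤ p.1 ∧ p.1 + 2 ≤ p.2 ∧ p.2 ≤ N} = (N - 1) * (N - 2) / 2 := by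
  obtain ⟨m, rfl⟩ : ∃ m, N = m + 1 := ⟨N - 1, by omega⟩
  let e : {p : ℕ × ℕ // 1 ≤ p.1 ∧ p.1 + 2 ≤ p.2 ∧ p.2 ≤ m + 1} ≃
      (Σ k : Fin m, Fin k) :=
    { toFun := fun p => ⟨⟨p.1.2 - 2, by have := p.2; omega⟩,
        ⟨p.1.1 - 1, by have := p.2; show p.1.1 - 1 < p.1.2 - 2; omega⟩⟩
      invFun := fun q => ⟨(q.2.1 + 1, q.1.1 + 2), by
        have h1 := q.1.2
        have h2 := q.2.2
        refine ⟨?_, ?_, ?_⟩ <;> dsimp only <;> omega⟩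
      left_inv := by
        rintro ⟨⟨a, b⟩, h1, h2, h3⟩
        dsimp only at h1 h2 h3
        simp only [Subtype.mk.injEq, Prod.mk.injEq]
        omega
      right_inv := by
        rintro ⟨⟨a, ha⟩, ⟨b, hb⟩⟩
        rfl }
  rw [Nat.card_congr e, Nat.card_eq_fintype_card, Fintype.card_sigma]
  simp only [Fintype.card_fin]
  rw [Fin.sum_univ_eq_sum_range (fun k => k) m, Finset.sum_range_id]
  rfl

theorem elem_indep (N : ℕ) :
    LinearIndependent ℝ
      (fun p : {p : ℕ × ℕ // 1 ≤ p.1 ∧ p.1 + 2 ≤ p.2 ∧ p.2 ≤ N} =>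
        elemMatrix p.1.1 p.1.2) := by
  classical
  rw [linearIndependent_iff']
  intro s g hs
  have key : ∀ J : ℕ, ∀ p ∈ s, p.1.2 = J → g p = 0 := by
    intro J
    induction J using Nat.strong_induction_on with
    | _ J ih =>
      intro p hp hJ
      have h := congrFun (congrFun hs p.1.1) (p.1.2 - 1)
      simp only [Finset.sum_apply, Pi.smul_apply, smul_eq_mul, Pi.zero_apply] at h
      rw [Finset.sum_eq_single_of_mem p hp] at h
      · simp only [elemMatrix, and_self, if_true] at h
        have h2 := p.2
        have h3 : (3 : ℝ) ≤ (p.1.2 : ℝ) := by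
          exact_mod_cast (by omega : 3 ≤ p.1.2)
        rcases mul_eq_zero.mp h with h | h
        · exact h
        · linarith
      · intro q hq hne
        by_cases hlt : q.1.2 < J
        · rw [ih _ hlt q hq rfl, zero_mul]
        · have hq2 := q.2
          have hp2 := p.2
          have hne' : ¬ (p.1.1 = q.1.1 ∧ p.1.2 = q.1.2) := by
            rintro ⟨h1, h2⟩
            exact hne (Subtype.ext (Prod.ext h1.symm h2.symm))
          unfold elemMatrix
          rw [if_neg (by omega), if_neg (by omega), if_neg (by omega), mul_zero]
  exact fun p hp => key _ p hp rfl

/-- The elemental weight matrices `E^{(I,J)}`, `1 ≤ I`, `I + 2 ≤ J ≤ N`, number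
`(N−1)(N−2)/2`, are linearly independent over `ℝ`, and their span has dimension
`(N−1)(N−2)/2`. -/
theorem elementals_linearIndependent (N : ℕ) (hN : 3 ≤ N) :
    Nat.card {p : ℕ × ℕ // 1 ≤ p.1 ∧ p.1 + 2 ≤ p.2 ∧ p.2 ≤ N} = (N - 1) * (N - 2) / 2 ∧
    LinearIndependent ℝ
      (fun p : {p : ℕ × ℕ // 1 ≤ p.1 ∧ p.1 + 2 ≤ p.2 ∧ p.2 ≤ N} =>
        elemMatrix p.1.1 p.1.2) ∧
    Module.finrank ℝ
        ↥(Submodule.span ℝ (Set.range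
          (fun p : {p : ℕ × ℕ // 1 ≤ p.1 ∧ p.1 + 2 ≤ p.2 ∧ p.2 ≤ N} =>
            elemMatrix p.1.1 p.1.2))) = (N - 1) * (N - 2) / 2 := by
  refine ⟨elem_card N hN, elem_indep N, ?_⟩
  have hpos : 0 < (N - 1) * (N - 2) / 2 := by
    have : 2 * 1 ≤ (N - 1) * (N - 2) := Nat.mul_le_mul (by omega) (by omega)
    omega
  have hfin : Finite {p : ℕ × ℕ // 1 ≤ p.1 ∧ p.1 + 2 ≤ p.2 ∧ p.2 ≤ N} :=
    Nat.finite_of_card_ne_zero (by rw [elem_card N hN]; omega)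
  have := Fintype.ofFinite {p : ℕ × ℕ // 1 ≤ p.1 ∧ p.1 + 2 ≤ p.2 ∧ p.2 ≤ N}
  rw [finrank_span_eq_card (elem_indep N), ← Nat.card_eq_fintype_card, elem_card N hN]
end
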